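/- arXiv:2102.04203 — 2 statements merged into one kernel-verified Lean document; each statement's English description precedes it below -/
import Mathlib

section
/- Let G be a finite graph (parallel edges allowed, no loops) and let T ⊆ V(G) be a set of terminal vertices such that every vertex in V(G)∖T has even degree. Then the maximal number of pairwise edge-disjoint T-paths in G equals (1/2)·Σ_{t∈T} λ_G(t, T−t), where λ_G(t, T−t) denotes the maximal number of pairwise edge-disjoint paths between t and T−t. -/
/-!
Common definitions: multigraphs (parallel edges allowed, no loops), walks,
paths, cuts, waves and related notions used in the statements below.
-/

universe u v

/-- A multigraph with vertex type `V` and edge type `E`: every edge is assigned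
an unordered pair of *distinct* end-vertices (parallel edges allowed, no loops). -/
structure Multigraph (V : Type u) (E : Type v) : Type (max u v) where
  inc : E → Sym2 V
  not_isDiag : ∀ e, ¬ (inc e).IsDiag

namespace Multigraph

variable {V : Type u} {E : Type v}

/-- Walks in a multigraph, recorded together with the edges they traverse. -/
inductive Walk (G : Multigraph V E) : V → V → Type (max u v)
  | nil (v : V) : Walk G v v
  | cons {u v w : V} (e : E) (he : G.inc e = s(u, v)) (p : Walk G v w) : Walk G u w

namespace Walk

variable {G : Multigraph V E}

/-- The list of vertices visited by a walk. -/
def support : ∀ {u w : V}, G.Walk u w → List V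
  | _, _, .nil v => [v]
  | u, _, .cons _ _ p => u :: p.support

/-- The list of edges traversed by a walk. -/
def edges : ∀ {u w : V}, G.Walk u w → List E
  | _, _, .nil _ => []
  | _, _, .cons e _ p => e :: p.edges

end Walk

/-- `δ_G(v)`: the set of edges incident with the vertex `v`. -/
def inci (G : Multigraph V E) (v : V) : Set E := {e | v ∈ G.inc e}

/-- `δ_G(X)`: the set of edges with exactly one end-vertex in `X`. -/
def cut (G : Multigraph V E) (X : Set V) : Set E :=
  {e | ∃ x y, G.inc e = s(x, y) ∧ x ∈ X ∧ y ∉ X}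

/-- Connectedness of a multigraph. -/
def Connected (G : Multigraph V E) : Prop := ∀ u v : V, Nonempty (G.Walk u v)

/-- A `T`-path: a path connecting two distinct vertices of `T`
with no internal vertex in `T`. -/
structure TPath (G : Multigraph V E) (T : Set V) : Type (max u v) where
  first : V
  last : V
  walk : G.Walk first last
  first_mem : first ∈ T
  last_mem : last ∈ T
  ne : first ≠ last
  support_nodup : walk.support.Nodup
  internal : ∀ x ∈ walk.support, x ∈ T → x = first ∨ x = last

/-- A system of pairwise edge-disjoint `T`-paths. -/
def TPathDisjoint (G : Multigraph V E) {T : Set V} (P : Set (G.TPath T)) : Prop :=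
  ∀ p ∈ P, ∀ q ∈ P, p ≠ q → ∀ e, e ∈ p.walk.edges → e ∉ q.walk.edges

/-- An `st`-path: a path from `s` to `t` (no internal vertex is `s` or `t`,
which is automatic as the vertices of a path are distinct). -/
structure STPath (G : Multigraph V E) (s t : V) : Type (max u v) where
  walk : G.Walk s t
  support_nodup : walk.support.Nodup

/-- A system of pairwise edge-disjoint `st`-paths. -/
def STPathDisjoint (G : Multigraph V E) {s t : V} (P : Set (G.STPath s t)) : Prop :=
  ∀ p ∈ P, ∀ q ∈ P, p ≠ q → ∀ e, e ∈ p.walk.edges → e ∉ q.walk.edges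

/-- A nontrivial path starting at `s`. -/
structure SPath (G : Multigraph V E) (s : V) : Type (max u v) where
  last : V
  walk : G.Walk s last
  support_nodup : walk.support.Nodup
  edges_ne_nil : walk.edges ≠ []

/-- A system of pairwise edge-disjoint paths starting at `s`. -/
def SPathDisjoint (G : Multigraph V E) {s : V} (W : Set (G.SPath s)) : Prop :=
  ∀ p ∈ W, ∀ q ∈ W, p ≠ q → ∀ e, e ∈ p.walk.edges → e ∉ q.walk.edges

/-- The set of last edges of a system of paths starting at `s`. -/
def lastEdges (G : Multigraph V E) {s : V} (W : Set (G.SPath s)) : Set E :=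
  {e | ∃ p ∈ W, p.walk.edges.getLast? = some e}

/-- `C` is a cut separating `A` from `B`. -/
def SepCut (G : Multigraph V E) (A B : Set V) (C : Set E) : Prop :=
  ∃ X : Set V, A ⊆ X ∧ (∀ b ∈ B, b ∉ X) ∧ C = G.cut X

/-- `C` is a `⊆`-minimal cut separating `A` from `B`. -/
def IsMinSepCut (G : Multigraph V E) (A B : Set V) (C : Set E) : Prop :=
  G.SepCut A B C ∧ ∀ D : Set E, G.SepCut A B D → D ⊆ C → D = C

/-- An `s`-`B`-wave: a system of pairwise edge-disjoint paths starting at `s`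
whose set of last edges is a `⊆`-minimal cut separating `s` from `B`. -/
def IsWave (G : Multigraph V E) (s : V) (B : Set V) (W : Set (G.SPath s)) : Prop :=
  G.SPathDisjoint W ∧ G.IsMinSepCut {s} B (G.lastEdges W)

/-- An Erdős–Menger `st`-cut: an `st`-cut which is orthogonal to some system of
pairwise edge-disjoint `st`-paths, i.e. it consists of exactly one edge chosen
from each path of the system. -/
def IsEMCut (G : Multigraph V E) (s t : V) (C : Set E) : Prop :=
  (∃ X : Set V, s ∈ X ∧ t ∉ X ∧ C = G.cut X) ∧
  ∃ P : Set (G.STPath s t), G.STPathDisjoint P ∧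
    (∀ p ∈ P, ∃! e, e ∈ C ∧ e ∈ p.walk.edges) ∧
    (∀ e ∈ C, ∃ p ∈ P, e ∈ p.walk.edges)

/-- The order `≼` on `st`-cuts: the `s`-side of `C` is contained in the
`s`-side of `D` (in a connected graph the `s`-side is unique). -/
def CutLE (G : Multigraph V E) (s t : V) (C D : Set E) : Prop :=
  ∃ X Y : Set V, s ∈ X ∧ t ∉ X ∧ C = G.cut X ∧ s ∈ Y ∧ t ∉ Y ∧ D = G.cut Y ∧ X ⊆ Y

/-- A cut of the form `C_W` for some `st`-wave `W`. -/
def IsWaveCut (G : Multigraph V E) (s t : V) (C : Set E) : Prop :=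
  ∃ W : Set (G.SPath s), G.IsWave s {t} W ∧ G.lastEdges W = C

/-- Deletion of a set of edges. -/
def deleteEdges (G : Multigraph V E) (F : Set E) : Multigraph V {e : E // e ∉ F} where
  inc e := G.inc e.1
  not_isDiag e := G.not_isDiag e.1

open Classical in
/-- Contraction of the vertex set `X` to the vertex `s` (edges inside `X` are
deleted, edges leaving `X` are redirected to `s`). -/
noncomputable def contract (G : Multigraph V E) (X : Set V) (s : V) :
    Multigraph V {e : E // ¬ (Sym2.map (fun v => if v ∈ X then s else v) (G.inc e)).IsDiag} where
  inc e := Sym2.map (fun v => if v ∈ X then s else v) (G.inc e.1)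
  not_isDiag e := e.2

/-- Reachability inside a set `S` of vertices. -/
def ReachableIn (G : Multigraph V E) (S : Set V) (x y : V) : Prop :=
  ∃ p : G.Walk x y, ∀ z ∈ p.support, z ∈ S

/-- `Y` is (the vertex set of) a connected component of the subgraph of `G`
induced by `S`. -/
def IsComponentOf (G : Multigraph V E) (Y S : Set V) : Prop :=
  Y.Nonempty ∧ Y ⊆ S ∧ ∀ x ∈ Y, ∀ y ∈ S, (G.ReachableIn S x y ↔ y ∈ Y)

/-- A cycle in a multigraph (a closed walk with distinct edges whose
vertices are distinct except that the first one equals the last one). -/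
structure Cycle (G : Multigraph V E) : Type (max u v) where
  base : V
  walk : G.Walk base base
  edges_ne_nil : walk.edges ≠ []
  edges_nodup : walk.edges.Nodup
  support_tail_nodup : walk.support.tail.Nodup

/-- A graph is Eulerian if its edge set can be partitioned into
edge sets of cycles. -/
def IsEulerian (G : Multigraph V E) : Prop :=
  ∃ C : Set G.Cycle,
    (∀ c ∈ C, ∀ d ∈ C, c ≠ d → ∀ e, e ∈ c.walk.edges → e ∉ d.walk.edges) ∧
    ∀ e : E, ∃ c ∈ C, e ∈ c.walk.edges

/-- A `T`-partition: a family `{A t : t ∈ T}` of pairwise disjoint vertex sets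
with `A t ∩ T = {t}`. -/
def IsTPartition (T : Set V) (A : V → Set V) : Prop :=
  (∀ t ∈ T, A t ∩ T = {t}) ∧
  ∀ t₁ ∈ T, ∀ t₂ ∈ T, t₁ ≠ t₂ → Disjoint (A t₁) (A t₂)

end Multigraph

namespace LC
open Finset

set_option linter.unusedSectionVars false

variable {V E : Type} [Fintype V] [DecidableEq V] [DecidableEq E]

/-- Indicator that a pair is separated by `X`. -/
def cr (X : Finset V) (p : V × V) : ℕ := if (p.1 ∈ X ↔ p.2 ∈ X) then 0 else 1

/-- Number of edges of `F` in the cut of `X`. -/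
def d (F : Finset E) (inc : E → V × V) (X : Finset V) : ℕ := ∑ e ∈ F, cr X (inc e)

/-- One step along an edge of `A`. -/
def Step (inc : E → V × V) (A : Finset E) (x y : V) : Prop :=
  ∃ e ∈ A, inc e = (x, y) ∨ inc e = (y, x)

/-- `A` connects two distinct vertices of `T`. -/
def TConn (inc : E → V × V) (T : Finset V) (A : Finset E) : Prop :=
  ∃ t ∈ T, ∃ t' ∈ T, t ≠ t' ∧ Relation.ReflTransGen (Step inc A) t t'

lemma d_union_inter (F : Finset E) (inc : E → V × V) (X Y : Finset V) :
    d F inc (X ∪ Y) + d F inc (X ∩ Y) ≤ d F inc X + d F inc Y := by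
  unfold d
  rw [← sum_add_distrib, ← sum_add_distrib]
  refine sum_le_sum fun e _ => ?_
  unfold cr
  simp only [mem_union, mem_inter]
  by_cases h1 : (inc e).1 ∈ X <;> by_cases h2 : (inc e).2 ∈ X <;>
  by_cases h3 : (inc e).1 ∈ Y <;> by_cases h4 : (inc e).2 ∈ Y <;> simp [h1, h2, h3, h4]

lemma d_sdiff_lt (F : Finset E) (inc : E → V × V) (X Y : Finset V) (e : E) (he : e ∈ F)
    (s t : V) (hst : inc e = (s, t) ∨ inc e = (t, s)) (hsX : s ∈ X) (hsY : s ∈ Y)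
    (htX : t ∉ X) (htY : t ∉ Y) :
    d F inc (X \ Y) + d F inc (Y \ X) < d F inc X + d F inc Y := by
  unfold d
  rw [← sum_add_distrib, ← sum_add_distrib]
  refine sum_lt_sum (fun e _ => ?_) ⟨e, he, ?_⟩
  · unfold cr
    simp only [mem_sdiff]
    by_cases h1 : (inc e).1 ∈ X <;> by_cases h2 : (inc e).2 ∈ X <;>
    by_cases h3 : (inc e).1 ∈ Y <;> by_cases h4 : (inc e).2 ∈ Y <;> simp [h1, h2, h3, h4]
  · unfold cr
    simp only [mem_sdiff]
    rcases hst with h | h <;> simp [h, hsX, hsY, htX, htY]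

lemma d_compl (F : Finset E) (inc : E → V × V) (X : Finset V) : d F inc Xᶜ = d F inc X := by
  unfold d
  refine sum_congr rfl fun e _ => ?_
  unfold cr
  by_cases h1 : (inc e).1 ∈ X <;> by_cases h2 : (inc e).2 ∈ X <;> simp [h1, h2]

lemma d_parity (F : Finset E) (inc : E → V × V) (X : Finset V) :
    (d F inc X : ZMod 2) = ∑ v ∈ X, (d F inc {v} : ZMod 2) := by
  have key : ∀ (X : Finset V) (p : V × V), (cr X p : ZMod 2) =
      (if p.1 ∈ X then 1 else 0) + (if p.2 ∈ X then 1 else 0) := by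
    intro X p
    unfold cr
    by_cases h1 : p.1 ∈ X <;> by_cases h2 : p.2 ∈ X <;> simp [h1, h2]
    decide
  unfold d
  push_cast
  rw [sum_comm]
  refine sum_congr rfl fun e _ => ?_
  rw [key]
  simp_rw [key, sum_add_distrib, mem_singleton]
  simp

lemma d_parity' (F : Finset E) (inc : E → V × V) (T X : Finset V) (t : V)
    (hE : ∀ v, v ∉ T → Even (d F inc {v})) (hX : X ∩ T = {t}) :
    d F inc X % 2 = d F inc {t} % 2 := by
  have htX : t ∈ X := by
    have : t ∈ X ∩ T := by simp [hX]
    exact (mem_inter.1 this).1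
  have h := d_parity F inc X
  rw [sum_eq_single_of_mem t htX] at h
  · exact (ZMod.natCast_eq_natCast_iff' _ _ 2).1 h
  · intro v hv hne
    have : v ∉ T := by
      intro hT
      have : v ∈ X ∩ T := mem_inter.2 ⟨hv, hT⟩
      rw [hX] at this
      exact hne (mem_singleton.1 this)
    exact (ZMod.natCast_eq_zero_iff_even).2 (hE v this)

/-- The edges between `s` and `X`. -/
def btw (F : Finset E) (inc : E → V × V) (s : V) (X : Finset V) : Finset E :=
  F.filter fun e => ((inc e).1 = s ∧ (inc e).2 ∈ X) ∨ ((inc e).2 = s ∧ (inc e).1 ∈ X)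

lemma d_insert (F : Finset E) (inc : E → V × V) (s : V) (X : Finset V) (hs : s ∉ X) :
    d F inc (insert s X) + 2 * (btw F inc s X).card = d F inc X + d F inc {s} := by
  unfold d btw
  rw [card_filter, mul_sum, ← sum_add_distrib, ← sum_add_distrib]
  refine sum_congr rfl fun e _ => ?_
  unfold cr
  simp only [mem_insert, mem_singleton]
  rcases inc e with ⟨a, b⟩
  simp only
  by_cases h1 : a = s <;> by_cases h2 : b = s
  · subst h1; subst h2; simp [hs]
  · subst h1; by_cases h4 : b ∈ X <;> simp [h2, h4, hs]
  · subst h2; by_cases h4 : a ∈ X <;> simp [h1, h4, hs]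
  · by_cases h3 : a ∈ X <;> by_cases h4 : b ∈ X <;> simp [h1, h2, h3, h4]

lemma btw_bound (F : Finset E) (inc : E → V × V) (s t : V) (X : Finset V) (hs : s ∉ X)
    (ht : t ∈ X) (e₁ : E) (he₁ : e₁ ∈ F) (h₁ : inc e₁ = (s, t) ∨ inc e₁ = (t, s))
    (h : d F inc X ≤ d F inc (insert s X)) :
    2 * ((btw F inc s X).erase e₁).card + 2 ≤ d F inc {s} := by
  have := d_insert F inc s X hs
  have hm : e₁ ∈ btw F inc s X := by
    unfold btw
    rw [mem_filter]
    refine ⟨he₁, ?_⟩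
    rcases h₁ with h | h <;> simp [h, ht]
  have := card_erase_add_one hm
  omega

lemma sdiff_inter_T (X Y T : Finset V) (t t' : V) (hne : t ≠ t')
    (hX : X ∩ T = {t}) (hY : Y ∩ T = {t'}) : (X \ Y) ∩ T = {t} := by
  rw [sdiff_inter_right_comm, hX]
  refine sdiff_eq_self_of_disjoint ?_
  rw [disjoint_singleton_left]
  intro h
  have hT : t ∈ X ∩ T := by simp [hX]
  have : t ∈ Y ∩ T := mem_inter.2 ⟨h, (mem_inter.1 hT).2⟩
  rw [hY, mem_singleton] at this
  exact hne this

set_option maxHeartbeats 1000000 in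
/-- The existence of a good split partner. -/
lemma exists_split (F : Finset E) (inc : E → V × V) (T : Finset V) (lam : V → ℕ)
    (hE : ∀ v, v ∉ T → Even (d F inc {v}))
    (hlam : ∀ t ∈ T, ∀ X : Finset V, X ∩ T = {t} → lam t ≤ d F inc X)
    (s t : V) (hs : s ∉ T) (ht : t ∈ T) (e₁ : E) (he₁ : e₁ ∈ F)
    (h₁ : inc e₁ = (s, t) ∨ inc e₁ = (t, s)) :
    ∃ e₂ ∈ F, e₂ ≠ e₁ ∧ ∃ v, v ≠ s ∧ (inc e₂ = (s, v) ∨ inc e₂ = (v, s)) ∧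
      (∀ X : Finset V, X ∩ T = {t} → d F inc X = lam t → s ∉ X → v ∉ X) ∧
      (∀ t' ∈ T, t' ≠ t → ∀ X : Finset V, X ∩ T = {t'} → d F inc X = lam t' → s ∈ X → v ∈ X) := by
  have hst : s ≠ t := fun h => hs (h ▸ ht)
  have hd2 : 2 ≤ d F inc {s} := by
    have h1 : cr {s} (inc e₁) ≤ d F inc {s} :=
      single_le_sum (f := fun e => cr {s} (inc e)) (fun _ _ => Nat.zero_le _) he₁
    have h2 : cr {s} (inc e₁) = 1 := by
      unfold cr
      rcases h₁ with h | h <;> simp [h, hst.symm]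
    obtain ⟨k, hk⟩ := hE s hs
    omega
  -- type A
  have hA : ∃ A : Finset E, 2 * A.card + 2 ≤ d F inc {s} ∧ ∀ e₂ ∈ F, e₂ ≠ e₁ → ∀ v,
      (inc e₂ = (s, v) ∨ inc e₂ = (v, s)) → ∀ X : Finset V, X ∩ T = {t} → d F inc X = lam t →
      s ∉ X → v ∈ X → e₂ ∈ A := by
    by_cases hne : ∃ X : Finset V, X ∩ T = {t} ∧ d F inc X = lam t ∧ s ∉ X
    · obtain ⟨X, hX, hmax⟩ := exists_max_image
        (univ.filter fun X : Finset V => X ∩ T = {t} ∧ d F inc X = lam t ∧ s ∉ X) card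
        (by obtain ⟨X, hX⟩ := hne; exact ⟨X, by simpa using hX⟩)
      simp only [mem_filter, mem_univ, true_and] at hX hmax
      obtain ⟨hXT, hXl, hXs⟩ := hX
      have htX : t ∈ X := by
        have : t ∈ X ∩ T := by simp [hXT]
        exact (mem_inter.1 this).1
      refine ⟨(btw F inc s X).erase e₁, btw_bound F inc s t X hXs htX e₁ he₁ h₁ ?_, ?_⟩
      · rw [hXl]
        apply hlam t ht
        rw [insert_inter_of_notMem hs, hXT]
      · intro e₂ he₂ hne v hv X' hX'T hX'l hX's hvX'
        have hU : (X ∪ X') ∩ T = {t} := by rw [union_inter_distrib_right, hXT, hX'T, union_self]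
        have hI : (X ∩ X') ∩ T = {t} := by
          rw [inter_inter_distrib_right, hXT, hX'T, inter_self]
        have h1 := hlam t ht _ hU
        have h2 := hlam t ht _ hI
        have h3 := d_union_inter F inc X X'
        have h4 := hmax (X ∪ X') ⟨hU, by omega, by simp [hXs, hX's]⟩
        have h5 : X = X ∪ X' := eq_of_subset_of_card_le subset_union_left h4
        have h6 : v ∈ X := by rw [h5]; exact mem_union_right _ hvX'
        rw [mem_erase]
        refine ⟨hne, ?_⟩
        unfold btw
        rw [mem_filter]
        refine ⟨he₂, ?_⟩
        rcases hv with h | h <;> simp [h, h6]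
    · push Not at hne
      refine ⟨∅, by simpa using hd2, ?_⟩
      intro e₂ _ _ v _ X h1 h2 h3
      exact absurd (hne X h1 h2) h3
  have hB : ∃ A : Finset E, 2 * A.card + 2 ≤ d F inc {s} ∧ ∀ e₂ ∈ F, e₂ ≠ e₁ → ∀ v,
      (inc e₂ = (s, v) ∨ inc e₂ = (v, s)) → ∀ t' ∈ T, t' ≠ t → ∀ X : Finset V, X ∩ T = {t'} →
      d F inc X = lam t' → s ∈ X → v ∉ X → e₂ ∈ A := by
    by_cases hne : ∃ X : Finset V, ∃ t' ∈ T, t' ≠ t ∧ X ∩ T = {t'} ∧ d F inc X = lam t' ∧ s ∈ X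
    · obtain ⟨X, hX, hmin⟩ := exists_min_image
        (univ.filter fun X : Finset V =>
          ∃ t' ∈ T, t' ≠ t ∧ X ∩ T = {t'} ∧ d F inc X = lam t' ∧ s ∈ X) card
        (by obtain ⟨X, hX⟩ := hne; exact ⟨X, by simpa using hX⟩)
      simp only [mem_filter, mem_univ, true_and] at hX hmin
      obtain ⟨t', ht', htt', hXT, hXl, hXs⟩ := hX
      have hnot : ∀ (Y : Finset V) (t'' : V), t'' ≠ t → Y ∩ T = {t''} → t ∉ Y := by
        intro Y t'' h1 h2 h3
        have : t ∈ Y ∩ T := mem_inter.2 ⟨h3, ht⟩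
        rw [h2, mem_singleton] at this
        exact h1 this.symm
      have htX : t ∉ X := hnot X t' htt' hXT
      refine ⟨(btw F inc s Xᶜ).erase e₁,
        btw_bound F inc s t Xᶜ (by simpa using hXs) (by simpa using htX) e₁ he₁ h₁ ?_, ?_⟩
      · have : insert s Xᶜ = (X.erase s)ᶜ := by rw [compl_erase]
        rw [this, d_compl, d_compl, hXl]
        apply hlam t' ht'
        rw [erase_inter, hXT, erase_eq_of_notMem]
        rw [mem_singleton]
        intro h
        exact hs (h ▸ ht')
      · intro e₂ he₂ hne v hv t'' ht'' htt'' X' hX'T hX'l hX's hvX'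
        have htX' : t ∉ X' := hnot X' t'' htt'' hX'T
        have heq : t'' = t' := by
          by_contra hne'
          have hlt := d_sdiff_lt F inc X X' e₁ he₁ s t h₁ hXs hX's htX htX'
          have h1 := sdiff_inter_T X X' T t' t'' (Ne.symm hne') hXT hX'T
          have h2 := sdiff_inter_T X' X T t'' t' hne' hX'T hXT
          have h3 := hlam t' ht' _ h1
          have h4 := hlam t'' ht'' _ h2
          omega
        subst heq
        have hU : (X ∪ X') ∩ T = {t''} := by rw [union_inter_distrib_right, hXT, hX'T, union_self]
        have hI : (X ∩ X') ∩ T = {t''} := by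
          rw [inter_inter_distrib_right, hXT, hX'T, inter_self]
        have h1 := hlam t'' ht' _ hU
        have h2 := hlam t'' ht' _ hI
        have h3 := d_union_inter F inc X X'
        have h4 := hmin (X ∩ X') ⟨t'', ht', htt', hI, by omega, by simp [hXs, hX's]⟩
        have h5 : X ∩ X' = X := eq_of_subset_of_card_le inter_subset_left h4
        have h6 : v ∉ X := by
          intro h; rw [← h5] at h; exact hvX' (mem_inter.1 h).2
        rw [mem_erase]
        refine ⟨hne, ?_⟩
        unfold btw
        rw [mem_filter]
        refine ⟨he₂, ?_⟩
        rcases hv with h | h <;> simp [h, h6]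
    · push Not at hne
      refine ⟨∅, by simpa using hd2, ?_⟩
      intro e₂ _ _ v _ t' h1 h2 X h3 h4 h5
      exact absurd h5 (hne X t' h1 h2 h3 h4)
  obtain ⟨A, hAc, hA⟩ := hA
  obtain ⟨B, hBc, hB⟩ := hB
  have hds : d F inc {s} = (F.filter fun e => cr {s} (inc e) = 1).card := by
    rw [card_filter]
    unfold d
    refine sum_congr rfl fun e _ => ?_
    unfold cr
    split_ifs <;> simp_all
  by_contra hcon
  push Not at hcon
  have hsub : (F.filter fun e => cr {s} (inc e) = 1) ⊆ insert e₁ (A ∪ B) := by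
    intro e he
    rw [mem_filter] at he
    obtain ⟨heF, hecr⟩ := he
    rw [mem_insert, mem_union]
    by_cases hee : e = e₁
    · exact Or.inl hee
    right
    obtain ⟨v, hvs, hv⟩ : ∃ v, v ≠ s ∧ (inc e = (s, v) ∨ inc e = (v, s)) := by
      rcases hi : inc e with ⟨a, b⟩
      rw [hi] at hecr
      unfold cr at hecr
      by_cases h1 : a = s <;> by_cases h2 : b = s
      · simp [h1, h2] at hecr
      · exact ⟨b, h2, by simp [h1]⟩
      · exact ⟨a, h1, by simp [h2]⟩
      · simp [h1, h2] at hecr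
    by_contra hAB
    rw [not_or] at hAB
    obtain ⟨t', ht', htt', X, hX, hXl, hsX, hvX⟩ := hcon e heF hee v hvs hv (by
      intro X h1 h2 h3 h4
      exact hAB.1 (hA e heF hee v hv X h1 h2 h3 h4))
    exact hAB.2 (hB e heF hee v hv t' ht' htt' X hX hXl hsX hvX)
  have h1 := card_le_card hsub
  have h2 := card_insert_le e₁ (A ∪ B)
  have h3 := card_union_le A B
  omega

set_option maxHeartbeats 1000000 in
/-- The main packing statement. -/
lemma packing (T : Finset V) (lam : V → ℕ) (n : ℕ) : ∀ (F : Finset E) (inc : E → V × V),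
    F.card = n → (∀ v, v ∉ T → Even (d F inc {v})) →
    (∀ t ∈ T, ∀ X : Finset V, X ∩ T = {t} → lam t ≤ d F inc X) →
    (∀ t ∈ T, lam t % 2 = d F inc {t} % 2) →
    ∃ k : ℕ, ∃ c : Fin k → Finset E, (∀ i, c i ⊆ F) ∧ (∀ i j, i ≠ j → Disjoint (c i) (c j)) ∧
      (∀ i, TConn inc T (c i)) ∧ ∑ t ∈ T, lam t ≤ 2 * k := by
  induction n using Nat.strong_induction_on with
  | _ n ih =>
  intro F inc hn hE hlam hpar
  by_cases hmix : ∃ e₁ ∈ F, ∃ s t, s ∉ T ∧ t ∈ T ∧ (inc e₁ = (s, t) ∨ inc e₁ = (t, s))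
  · obtain ⟨e₁, he₁, s, t, hs, ht, h₁⟩ := hmix
    obtain ⟨e₂, he₂, hne, v, hvs, h₂, hA, hB⟩ :=
      exists_split F inc T lam hE hlam s t hs ht e₁ he₁ h₁
    have hst : s ≠ t := fun h => hs (h ▸ ht)
    let inc' := Function.update inc e₁ (t, v)
    have hd : ∀ X, d (F.erase e₂) inc' X + cr X (s, t) + cr X (s, v) =
        d F inc X + cr X (t, v) := by
      intro X
      have hsym : ∀ a b : V, cr X (a, b) = cr X (b, a) := by
        intro a b; unfold cr; simp only [iff_comm]
      have he₁' : e₁ ∈ F.erase e₂ := mem_erase.2 ⟨hne.symm, he₁⟩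
      have a1 : d F inc X = cr X (inc e₂) + (cr X (inc e₁) +
          ∑ e ∈ (F.erase e₂).erase e₁, cr X (inc e)) := by
        unfold d
        rw [add_sum_erase _ (fun e => cr X (inc e)) he₁', add_sum_erase _ (fun e => cr X (inc e)) he₂]
      have a2 : d (F.erase e₂) inc' X = cr X (t, v) +
          ∑ e ∈ (F.erase e₂).erase e₁, cr X (inc e) := by
        unfold d
        rw [← add_sum_erase _ _ he₁']
        congr 1
        · simp [inc']
        · refine sum_congr rfl fun e he => ?_
          simp [inc', Function.update_of_ne (mem_erase.1 he).1]
      have a3 : cr X (inc e₁) = cr X (s, t) := by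
        rcases h₁ with h | h <;> rw [h]
        exact hsym _ _
      have a4 : cr X (inc e₂) = cr X (s, v) := by
        rcases h₂ with h | h <;> rw [h]
        exact hsym _ _
      omega
    have hpar' : ∀ X, d (F.erase e₂) inc' X % 2 = d F inc X % 2 := by
      intro X
      have := hd X
      unfold cr at this
      simp only at this
      by_cases x1 : s ∈ X <;> by_cases x2 : t ∈ X <;> by_cases x3 : v ∈ X <;>
        simp [x1, x2, x3] at this <;> omega
    obtain ⟨k, c, hc1, hc2, hc3, hc4⟩ := ih (F.erase e₂).card
      (by rw [← hn]; exact card_erase_lt_of_mem he₂) (F.erase e₂) inc' rfl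
      (by
        intro w hw
        have := hpar' {w}
        have := hE w hw
        rw [Nat.even_iff] at *
        omega)
      (by
        intro t₀ ht₀ X hX
        have e1 := hpar' X
        have e2 := d_parity' F inc T X t₀ hE hX
        have e3 := hpar t₀ ht₀
        have e4 := hlam t₀ ht₀ X hX
        have e5 := hd X
        by_contra hlt
        push Not at hlt
        by_cases htt : t₀ = t
        · subst htt
          have htX : t₀ ∈ X := by
            have : t₀ ∈ X ∩ T := by simp [hX]
            exact (mem_inter.1 this).1
          have hA' := hA X hX
          unfold cr at e5
          simp only [htX] at e5
          by_cases x1 : s ∈ X <;> by_cases x3 : v ∈ X <;>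
            simp [x1, x3] at e5 hA' <;> omega
        · have htX : t ∉ X := by
            intro h
            have : t ∈ X ∩ T := mem_inter.2 ⟨h, ht⟩
            rw [hX, mem_singleton] at this
            exact htt this.symm
          have hB' := hB t₀ ht₀ htt X hX
          unfold cr at e5
          simp only [htX] at e5
          by_cases x1 : s ∈ X <;> by_cases x3 : v ∈ X <;>
            simp [x1, x3] at e5 hB' <;> omega)
      (by
        intro t₀ ht₀
        rw [hpar', hpar t₀ ht₀])
    have hn2 : ∀ i, e₂ ∉ c i := fun i h => (mem_erase.1 (hc1 i h)).1 rfl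
    refine ⟨k, fun i => if e₁ ∈ c i then insert e₂ (c i) else c i, ?_, ?_, ?_, hc4⟩
    · intro i
      have h0 : c i ⊆ F := (hc1 i).trans (erase_subset _ _)
      dsimp only
      split_ifs
      · exact insert_subset he₂ h0
      · exact h0
    · intro i j hij
      have := hc2 i j hij
      dsimp only
      split_ifs with g1 g2 g2
      · exact absurd g2 (disjoint_left.1 this g1)
      · rw [disjoint_insert_left]; exact ⟨hn2 j, this⟩
      · rw [disjoint_insert_right]; exact ⟨hn2 i, this⟩
      · exact this
    · intro i
      obtain ⟨a, ha, b, hb, hab, hr⟩ := hc3 i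
      refine ⟨a, ha, b, hb, hab, ?_⟩
      have lift : ∀ x y, Step inc' (c i) x y → Relation.ReflTransGen
          (Step inc (if e₁ ∈ c i then insert e₂ (c i) else c i)) x y := by
        rintro x y ⟨e, he, hxy⟩
        by_cases hee : e = e₁
        · subst hee
          rw [if_pos he]
          have s1 : ∀ x y, (x = s ∧ y = t ∨ x = t ∧ y = s) →
              Step inc (insert e₂ (c i)) x y := by
            rintro x y (⟨rfl, rfl⟩ | ⟨rfl, rfl⟩)
            · exact ⟨e, mem_insert_of_mem he, h₁⟩
            · exact ⟨e, mem_insert_of_mem he, h₁.symm⟩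
          have s2 : ∀ x y, (x = s ∧ y = v ∨ x = v ∧ y = s) →
              Step inc (insert e₂ (c i)) x y := by
            rintro x y (⟨rfl, rfl⟩ | ⟨rfl, rfl⟩)
            · exact ⟨e₂, mem_insert_self _ _, h₂⟩
            · exact ⟨e₂, mem_insert_self _ _, h₂.symm⟩
          simp only [inc', Function.update_self, Prod.mk.injEq] at hxy
          rcases hxy with ⟨rfl, rfl⟩ | ⟨rfl, rfl⟩
          · exact (Relation.ReflTransGen.single (s1 _ s (by simp))).tail (s2 s _ (by simp))
          · exact (Relation.ReflTransGen.single (s2 _ s (by simp))).tail (s1 s _ (by simp))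
        · refine Relation.ReflTransGen.single ⟨e, ?_, ?_⟩
          · split_ifs
            · exact mem_insert_of_mem he
            · exact he
          · simpa only [inc', Function.update_of_ne hee] using hxy
      have hr' := Relation.ReflTransGen.lift' id lift _ _ hr
      exact hr'
  · push Not at hmix
    let F' := F.filter fun e => (inc e).1 ∈ T ∧ (inc e).2 ∈ T ∧ (inc e).1 ≠ (inc e).2
    let f := F'.equivFin.symm
    have hf : ∀ i, ((f i : F') : E) ∈ F' := fun i => (f i).2
    refine ⟨F'.card, fun i => {((f i : F') : E)}, ?_, ?_, ?_, ?_⟩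
    · intro i
      rw [singleton_subset_iff]
      exact (mem_filter.1 (hf i)).1
    · intro i j hij
      rw [disjoint_singleton]
      intro h
      exact hij (f.injective (Subtype.ext h))
    · intro i
      obtain ⟨_, h1, h2, h3⟩ := mem_filter.1 (hf i)
      exact ⟨_, h1, _, h2, h3, Relation.ReflTransGen.single ⟨_, mem_singleton_self _, Or.inl rfl⟩⟩
    · calc ∑ t ∈ T, lam t ≤ ∑ t ∈ T, d F inc {t} := by
            refine sum_le_sum fun t ht => hlam t ht _ ?_
            exact inter_eq_left.2 (by simpa using ht)
        _ = ∑ e ∈ F, ∑ t ∈ T, cr {t} (inc e) := by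
            unfold d; rw [sum_comm]
        _ ≤ ∑ e ∈ F, (if (inc e).1 ∈ T ∧ (inc e).2 ∈ T ∧ (inc e).1 ≠ (inc e).2 then 2 else 0) := by
            refine sum_le_sum fun e he => ?_
            split_ifs with h
            · have : ∀ t ∈ T, cr {t} (inc e) ≤ (if (inc e).1 = t then 1 else 0) +
                  (if (inc e).2 = t then 1 else 0) := by
                intro t _
                unfold cr
                by_cases h1 : (inc e).1 = t <;> by_cases h2 : (inc e).2 = t <;> simp [h1, h2]
              refine (sum_le_sum this).trans ?_
              rw [sum_add_distrib]
              simp [h.1, h.2.1]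
            · rw [Nat.le_zero]
              refine sum_eq_zero fun t ht => ?_
              by_contra hc
              apply h
              have h12 : ((inc e).1 = t ∧ (inc e).2 ≠ t) ∨ ((inc e).1 ≠ t ∧ (inc e).2 = t) := by
                unfold cr at hc
                by_cases h1 : (inc e).1 = t <;> by_cases h2 : (inc e).2 = t <;>
                  simp [h1, h2] at hc ⊢
              rcases h12 with ⟨h1, h2⟩ | ⟨h1, h2⟩
              · refine ⟨h1 ▸ ht, ?_, fun h => h2 (h ▸ h1)⟩
                by_contra h3
                exact (hmix e he _ t h3 ht).2 (by rw [← h1])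
              · refine ⟨?_, h2 ▸ ht, fun h => h1 (h ▸ h2)⟩
                by_contra h3
                exact (hmix e he _ t h3 ht).1 (by rw [← h2])
        _ = 2 * F'.card := by
            rw [card_filter, mul_sum]
            refine sum_congr rfl fun e _ => ?_
            split_ifs <;> rfl

end LC

namespace LC
open Multigraph

section walks
variable {V E : Type} {G : Multigraph V E}

lemma start_mem {u w : V} (p : G.Walk u w) : u ∈ p.support := by
  cases p <;> simp [Walk.support]

lemma end_mem {u w : V} (p : G.Walk u w) : w ∈ p.support := by
  induction p with
  | nil v => simp [Walk.support]
  | cons e he p ih => simp [Walk.support, ih]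

lemma exists_front_part {u w : V} (p : G.Walk u w) (x : V) (hx : x ∈ p.support) :
    ∃ q : G.Walk u x, (∀ e ∈ q.edges, e ∈ p.edges) ∧
      (x = w ∨ q.edges.length < p.edges.length) := by
  induction p with
  | nil v =>
    simp only [Walk.support, List.mem_singleton] at hx
    subst hx
    exact ⟨.nil _, by simp [Walk.edges], Or.inl rfl⟩
  | @cons u v w e he p ih =>
    by_cases hxu : x = u
    · subst hxu
      exact ⟨.nil _, by simp [Walk.edges], Or.inr (by simp [Walk.edges])⟩
    · have hx' : x ∈ p.support := by simpa [Walk.support, hxu] using hx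
      obtain ⟨q, h1, h2⟩ := ih hx'
      refine ⟨.cons e he q, ?_, ?_⟩
      · intro f hf
        simp only [Walk.edges, List.mem_cons] at hf ⊢
        exact hf.imp_right (h1 f)
      · simpa [Walk.edges] using h2

lemma exists_back_part {u w : V} (p : G.Walk u w) (x : V) (hx : x ∈ p.support) :
    ∃ q : G.Walk x w, (∀ e ∈ q.edges, e ∈ p.edges) ∧
      q.edges.length ≤ p.edges.length ∧ (p.support.Nodup → q.support.Nodup) := by
  induction p with
  | nil v =>
    simp only [Walk.support, List.mem_singleton] at hx
    subst hx
    exact ⟨.nil _, by simp [Walk.edges], le_rfl, id⟩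
  | @cons u v w e he p ih =>
    by_cases hxu : x = u
    · subst hxu
      exact ⟨.cons e he p, fun _ h => h, le_rfl, id⟩
    · have hx' : x ∈ p.support := by simpa [Walk.support, hxu] using hx
      obtain ⟨q, h1, h2, h3⟩ := ih hx'
      refine ⟨q, ?_, ?_, ?_⟩
      · intro f hf
        simp only [Walk.edges, List.mem_cons]
        exact Or.inr (h1 f hf)
      · simp only [Walk.edges, List.length_cons]; omega
      · intro h
        exact h3 (by simpa [Walk.support] using (List.nodup_cons.1 h).2)

lemma exists_path {u w : V} (p : G.Walk u w) :
    ∃ q : G.Walk u w, (∀ e ∈ q.edges, e ∈ p.edges) ∧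
      q.edges.length ≤ p.edges.length ∧ q.support.Nodup := by
  induction p with
  | nil v => exact ⟨.nil v, fun _ h => h, le_rfl, by simp [Walk.support]⟩
  | @cons u v w e he p ih =>
    obtain ⟨q, h1, h2, h3⟩ := ih
    by_cases hu : u ∈ q.support
    · obtain ⟨r, g1, g2, g3⟩ := exists_back_part q u hu
      refine ⟨r, ?_, ?_, g3 h3⟩
      · intro f hf
        simp only [Walk.edges, List.mem_cons]
        exact Or.inr (h1 f (g1 f hf))
      · simp only [Walk.edges, List.length_cons]; omega
    · refine ⟨.cons e he q, ?_, ?_, ?_⟩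
      · intro f hf
        simp only [Walk.edges, List.mem_cons] at hf ⊢
        exact hf.imp_right (h1 f)
      · simpa [Walk.edges] using h2
      · simp only [Walk.support, List.nodup_cons]
        exact ⟨hu, h3⟩

lemma exists_concat {u w x : V} (p : G.Walk u w) (e : E) (he : G.inc e = s(w, x)) :
    ∃ q : G.Walk u x, q.support = p.support ++ [x] ∧ q.edges = p.edges ++ [e] := by
  induction p with
  | nil v => exact ⟨.cons e he (.nil x), by simp [Walk.support], by simp [Walk.edges]⟩
  | cons f hf p ih =>
    obtain ⟨q, h1, h2⟩ := ih he
    exact ⟨.cons f hf q, by simp [Walk.support, h1], by simp [Walk.edges, h2]⟩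

lemma exists_reverse {u w : V} (p : G.Walk u w) :
    ∃ q : G.Walk w u, q.support = p.support.reverse ∧ q.edges = p.edges.reverse := by
  induction p with
  | nil v => exact ⟨.nil v, by simp [Walk.support], by simp [Walk.edges]⟩
  | @cons u v w e he p ih =>
    obtain ⟨q, h1, h2⟩ := ih
    obtain ⟨r, g1, g2⟩ := exists_concat q e (by rw [he, Sym2.eq_swap])
    exact ⟨r, by simp [Walk.support, g1, h1], by simp [Walk.edges, g2, h2]⟩

lemma exists_cross {u w : V} (p : G.Walk u w) (X : Set V) (hu : u ∈ X) (hw : w ∉ X) :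
    ∃ e ∈ p.edges, e ∈ G.cut X := by
  induction p with
  | nil v => exact absurd hu hw
  | @cons u v w e he p ih =>
    by_cases hv : v ∈ X
    · obtain ⟨f, h1, h2⟩ := ih hv hw
      exact ⟨f, by simp [Walk.edges, h1], h2⟩
    · exact ⟨e, by simp [Walk.edges], u, v, he, hu, hv⟩

lemma tpath_reverse {T : Set V} (p : G.TPath T) :
    ∃ q : G.TPath T, q.first = p.last ∧ ∀ e, e ∈ q.walk.edges ↔ e ∈ p.walk.edges := by
  obtain ⟨r, h1, h2⟩ := exists_reverse p.walk
  refine ⟨⟨p.last, p.first, r, p.last_mem, p.first_mem, p.ne.symm, ?_, ?_⟩, rfl, ?_⟩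
  · rw [h1]; exact List.nodup_reverse.2 p.support_nodup
  · intro x hx hT
    rw [h1, List.mem_reverse] at hx
    exact (p.internal x hx hT).symm
  · intro e
    simp [h2]

lemma tpath_nonempty {T : Set V} (p : G.TPath T) : ∃ e, e ∈ p.walk.edges := by
  obtain ⟨e, he, _⟩ := exists_cross p.walk {p.first} rfl (fun h => p.ne h.symm)
  exact ⟨e, he⟩

/-- A walk between distinct terminals yields a `T`-path inside its edge set. -/
lemma exists_tpath (T : Set V) (A : Set E)
    (h : ∃ t ∈ T, ∃ t' ∈ T, t ≠ t' ∧ ∃ p : G.Walk t t', ∀ e ∈ p.edges, e ∈ A) :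
    ∃ q : G.TPath T, ∀ e ∈ q.walk.edges, e ∈ A := by
  classical
  have hex : ∃ n : ℕ, ∃ t ∈ T, ∃ t' ∈ T, t ≠ t' ∧ ∃ p : G.Walk t t',
      (∀ e ∈ p.edges, e ∈ A) ∧ p.edges.length = n := by
    obtain ⟨t, ht, t', ht', hne, p, hp⟩ := h
    exact ⟨_, t, ht, t', ht', hne, p, hp, rfl⟩
  obtain ⟨t, ht, t', ht', hne, p, hp, hlen⟩ := Nat.find_spec hex
  have hmin := fun m (hm : m < Nat.find hex) => Nat.find_min hex hm
  obtain ⟨q, h1, h2, h3⟩ := exists_path p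
  refine ⟨⟨t, t', q, ht, ht', hne, h3, ?_⟩, fun e he => hp e (h1 e he)⟩
  intro x hx hxT
  by_contra hcon
  rw [not_or] at hcon
  obtain ⟨r, g1, g2⟩ := exists_front_part q x hx
  rcases g2 with g2 | g2
  · exact hcon.2 g2
  · exact hmin r.edges.length (by omega)
      ⟨t, ht, x, hxT, fun h => hcon.1 h.symm, r, fun e he => hp e (h1 e (g1 e he)), rfl⟩

/-- Representatives: a disjoint family has at most as many members as any set
of edges meeting all of them. -/
lemma ncard_le [Finite E] {T : Set V} (P : Set (G.TPath T)) (hP : G.TPathDisjoint P)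
    (C : Set E) (hC : ∀ p ∈ P, ∃ e ∈ p.walk.edges, e ∈ C) : P.Finite ∧ P.ncard ≤ C.ncard := by
  classical
  have hC' : ∀ p : G.TPath T, ∃ e, p ∈ P → e ∈ p.walk.edges ∧ e ∈ C := by
    intro p
    by_cases hp : p ∈ P
    · obtain ⟨e, h1, h2⟩ := hC p hp
      exact ⟨e, fun _ => ⟨h1, h2⟩⟩
    · obtain ⟨e, _⟩ := tpath_nonempty p
      exact ⟨e, fun h => absurd h hp⟩
  choose f hf using hC'
  have hf1 := fun p hp => (hf p hp).1
  have hf2 : ∀ p ∈ P, f p ∈ C := fun p hp => (hf p hp).2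
  have hinj : Set.InjOn f P := by
    intro p hp q hq hpq
    by_contra hne
    exact hP p hp q hq hne (f p) (hf1 p hp) (hpq ▸ hf1 q hq)
  exact ⟨Set.Finite.of_injOn (t := C) hf2 hinj C.toFinite,
    Set.ncard_le_ncard_of_injOn f hf2 hinj C.toFinite⟩

end walks

lemma walk_of_conn {V E : Type} [DecidableEq V] [DecidableEq E] (G : Multigraph V E)
    (inc : E → V × V) (hinc : ∀ e, G.inc e = s((inc e).1, (inc e).2)) (A : Finset E) (x y : V)
    (h : Relation.ReflTransGen (Step inc A) x y) :
    ∃ p : G.Walk x y, ∀ e ∈ p.edges, e ∈ A := by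
  induction h using Relation.ReflTransGen.head_induction_on with
  | refl => exact ⟨.nil _, by simp [Walk.edges]⟩
  | head h1 _ ih =>
    obtain ⟨p, hp⟩ := ih
    obtain ⟨e, he, hxy⟩ := h1
    refine ⟨.cons e ?_ p, ?_⟩
    · rw [hinc]
      rcases hxy with h | h <;> rw [h]
      exact Sym2.eq_swap
    · intro f hf
      simp only [Walk.edges, List.mem_cons] at hf
      rcases hf with rfl | hf
      · exact he
      · exact hp f hf

end LC

/-- **Lovász–Cherkassky theorem.** If `G` is a finite graph and every vertex
outside `T` has even degree, then twice the maximal number of pairwise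
edge-disjoint `T`-paths equals `∑ t ∈ T, λ(t, T−t)`, where `λ(t, T−t)` is the
maximal number of pairwise edge-disjoint paths between `t` and `T−t`
(equivalently, `T`-paths with first vertex `t`). -/
theorem lovasz_cherkassky {V E : Type} [Fintype V] [Fintype E]
    (G : Multigraph V E) (T : Set V)
    (hEven : ∀ v : V, v ∉ T → Even (G.inci v).ncard) :
    2 * sSup {n : ℕ | ∃ P : Set (G.TPath T), G.TPathDisjoint P ∧ P.ncard = n} =
      ∑ t ∈ (Set.toFinite T).toFinset,
        sSup {n : ℕ | ∃ P : Set (G.TPath T), G.TPathDisjoint P ∧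
          (∀ p ∈ P, p.first = t) ∧ P.ncard = n} := by
  classical
  obtain ⟨inc, hinc⟩ : ∃ inc : E → V × V, ∀ e, G.inc e = s((inc e).1, (inc e).2) := by
    have : ∀ e, ∃ p : V × V, G.inc e = s(p.1, p.2) := by
      intro e
      induction h : G.inc e using Sym2.ind with
      | _ a b => exact ⟨(a, b), rfl⟩
    choose f hf using this
    exact ⟨f, hf⟩
  have hdiag : ∀ e, (inc e).1 ≠ (inc e).2 := by
    intro e h
    apply G.not_isDiag e
    rw [hinc e, Sym2.mk_isDiag_iff]
    exact h
  set TF := (Set.toFinite T).toFinset with hTF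
  have hTm : ∀ t, t ∈ TF ↔ t ∈ T := fun t => by simp [hTF]
  have hcut : ∀ X : Finset V, (G.cut (X : Set V)).ncard = LC.d Finset.univ inc X := by
    intro X
    have h1 : G.cut (X : Set V) =
        ((Finset.univ.filter fun e => ¬ ((inc e).1 ∈ X ↔ (inc e).2 ∈ X) : Finset E) : Set E) := by
      ext e
      simp only [Multigraph.cut, Set.mem_setOf_eq, Finset.coe_filter, Finset.mem_univ, true_and,
        Finset.mem_coe, hinc e]
      constructor
      · rintro ⟨x, y, hxy, hx, hy⟩
        rcases Sym2.eq_iff.1 hxy with ⟨h1, h2⟩ | ⟨h1, h2⟩ <;> rw [h1, h2] <;> tauto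
      · intro h
        by_cases h1 : (inc e).1 ∈ X
        · exact ⟨_, _, rfl, h1, fun h2 => h (by tauto)⟩
        · exact ⟨_, _, Sym2.eq_swap, by tauto, h1⟩
    rw [h1, Set.ncard_coe_finset, Finset.card_filter]
    unfold LC.d LC.cr
    refine Finset.sum_congr rfl fun e _ => ?_
    split_ifs <;> rfl
  have hE : ∀ v, v ∉ TF → Even (LC.d Finset.univ inc {v}) := by
    intro v hv
    rw [← hcut]
    have : G.cut (({v} : Finset V) : Set V) = G.inci v := by
      ext e
      simp only [Multigraph.cut, Multigraph.inci, Set.mem_setOf_eq, Finset.coe_singleton,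
        Set.mem_singleton_iff]
      constructor
      · rintro ⟨x, y, hxy, rfl, _⟩
        rw [hxy]; exact Sym2.mem_mk_left _ _
      · intro h
        have hd := hdiag e
        rw [hinc e, Sym2.mem_iff] at h
        rcases h with h | h
        · exact ⟨_, _, hinc e, h.symm, fun h' => hd (by rw [← h, h'])⟩
        · exact ⟨_, _, (hinc e).trans Sym2.eq_swap, h.symm, fun h' => hd (by rw [← h, h'])⟩
    rw [this]
    exact hEven v (fun h => hv ((hTm v).2 h))
  have hbdd : ∀ Q : Set (G.TPath T) → Prop,
      BddAbove {n : ℕ | ∃ P : Set (G.TPath T), G.TPathDisjoint P ∧ Q P ∧ P.ncard = n} := by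
    intro Q
    refine ⟨(Set.univ : Set E).ncard, ?_⟩
    rintro n ⟨P, hP, _, rfl⟩
    refine (LC.ncard_le P hP Set.univ fun p _ => ?_).2
    obtain ⟨e, he⟩ := LC.tpath_nonempty p
    exact ⟨e, he, trivial⟩
  have hbdd0 : BddAbove {n : ℕ | ∃ P : Set (G.TPath T), G.TPathDisjoint P ∧ P.ncard = n} := by
    simpa using hbdd fun _ => True
  apply le_antisymm
  · -- upper bound
    obtain ⟨P, hP, hPn⟩ := Nat.sSup_mem
      (s := {n : ℕ | ∃ P : Set (G.TPath T), G.TPathDisjoint P ∧ P.ncard = n})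
      ⟨0, ∅, by simp [Multigraph.TPathDisjoint], by simp⟩ hbdd0
    rw [← hPn]
    have hfin : P.Finite := (LC.ncard_le P hP Set.univ fun p _ => by
      obtain ⟨e, he⟩ := LC.tpath_nonempty p
      exact ⟨e, he, trivial⟩).1
    have hcount : 2 * P.ncard = ∑ t ∈ TF,
        (hfin.toFinset.filter fun p => p.first = t ∨ p.last = t).card := by
      simp_rw [Finset.card_filter]
      rw [Finset.sum_comm, Set.ncard_eq_toFinset_card P hfin, mul_comm, ← smul_eq_mul,
        ← Finset.sum_const]
      refine Finset.sum_congr rfl fun p _ => ?_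
      have : ∀ t, (if p.first = t ∨ p.last = t then 1 else 0) =
          (if p.first = t then 1 else 0) + (if p.last = t then 1 else 0) := by
        intro t
        have := p.ne
        by_cases h1 : p.first = t <;> by_cases h2 : p.last = t <;> simp [h1, h2]
        exact this (h1.trans h2.symm)
      simp_rw [this, Finset.sum_add_distrib]
      simp [hTm, p.first_mem, p.last_mem]
    rw [hcount]
    refine Finset.sum_le_sum fun t _ => ?_
    apply le_csSup (hbdd fun P => ∀ p ∈ P, p.first = t)
    have hr : ∀ p : G.TPath T, ∃ q : G.TPath T, (p.first = t ∨ p.last = t → q.first = t) ∧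
        ∀ e, e ∈ q.walk.edges ↔ e ∈ p.walk.edges := by
      intro p
      by_cases h : p.first = t
      · exact ⟨p, fun _ => h, fun _ => Iff.rfl⟩
      · obtain ⟨q, h1, h2⟩ := LC.tpath_reverse p
        exact ⟨q, fun h' => h1.trans (h'.resolve_left h), h2⟩
    choose r hr1 hr2 using hr
    refine ⟨r '' {p | p ∈ P ∧ (p.first = t ∨ p.last = t)}, ?_, ?_, ?_⟩
    · rintro _ ⟨p, ⟨hp, _⟩, rfl⟩ _ ⟨q, ⟨hq, _⟩, rfl⟩ hne e he
      rw [hr2] at he ⊢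
      exact hP p hp q hq (fun h => hne (by rw [h])) e he
    · rintro _ ⟨p, ⟨_, hp⟩, rfl⟩
      exact hr1 p hp
    · rw [Set.ncard_image_of_injOn]
      · rw [← Set.ncard_coe_finset]
        congr 1
        ext p
        simp
      · rintro p ⟨hp, _⟩ q ⟨hq, _⟩ hpq
        by_contra hne
        obtain ⟨e, he⟩ := LC.tpath_nonempty p
        refine hP p hp q hq hne e he ?_
        rw [← hr2, ← hpq, hr2]
        exact he
  · -- lower bound
    have hmin : ∀ t, ∃ m : ℕ, t ∈ TF → (∃ X : Finset V, X ∩ TF = {t} ∧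
        LC.d Finset.univ inc X = m) ∧
        ∀ X : Finset V, X ∩ TF = {t} → m ≤ LC.d Finset.univ inc X := by
      intro t
      by_cases ht : t ∈ TF
      · obtain ⟨X, hX, hm⟩ := Finset.exists_min_image
          (Finset.univ.filter fun X : Finset V => X ∩ TF = {t}) (LC.d Finset.univ inc)
          ⟨{t}, by simp [ht]⟩
        simp only [Finset.mem_filter, Finset.mem_univ, true_and] at hX hm
        exact ⟨_, fun _ => ⟨⟨X, hX, rfl⟩, hm⟩⟩
      · exact ⟨0, fun h => absurd h ht⟩
    choose lam hlam using hmin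
    obtain ⟨k, c, -, hc2, hc3, hc4⟩ := LC.packing TF lam _ Finset.univ inc rfl hE
      (fun t ht => (hlam t ht).2)
      (by
        intro t ht
        obtain ⟨⟨X, hX, hXm⟩, _⟩ := hlam t ht
        rw [← hXm]
        exact LC.d_parity' _ inc TF X t hE hX)
    refine le_trans (Finset.sum_le_sum (g := lam) fun t ht => ?_) (hc4.trans ?_)
    · obtain ⟨⟨X, hX, hXm⟩, _⟩ := hlam t ht
      refine csSup_le (Set.nonempty_of_mem (x := 0)
        ⟨∅, by simp [Multigraph.TPathDisjoint], by simp, by simp⟩) ?_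
      rintro n ⟨P, hP, hPt, rfl⟩
      rw [← hXm, ← hcut]
      refine (LC.ncard_le P hP _ fun p hp => ?_).2
      apply LC.exists_cross
      · have : t ∈ X ∩ TF := by simp [hX]
        rw [hPt p hp]
        exact (Finset.mem_inter.1 this).1
      · intro h
        have : p.last ∈ X ∩ TF := Finset.mem_inter.2 ⟨h, (hTm _).2 p.last_mem⟩
        rw [hX, Finset.mem_singleton] at this
        exact p.ne ((hPt p hp).trans this.symm)
    · apply Nat.mul_le_mul_left
      apply le_csSup hbdd0
      have hq : ∀ i, ∃ q : G.TPath T, ∀ e ∈ q.walk.edges, e ∈ c i := by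
        intro i
        obtain ⟨t, ht, t', ht', hne, hr⟩ := hc3 i
        obtain ⟨p, hp⟩ := LC.walk_of_conn G inc hinc (c i) t t' hr
        exact LC.exists_tpath T (c i : Set E)
          ⟨t, (hTm t).1 ht, t', (hTm t').1 ht', hne, p, hp⟩
      choose q hq using hq
      have hinj : Function.Injective q := by
        intro i j hij
        by_contra hne
        obtain ⟨e, he⟩ := LC.tpath_nonempty (q i)
        exact Finset.disjoint_left.1 (hc2 i j hne) (hq i e he) (hq j e (hij ▸ he))
      refine ⟨Set.range q, ?_, ?_⟩
      · rintro _ ⟨i, rfl⟩ _ ⟨j, rfl⟩ hne e he he'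
        exact Finset.disjoint_left.1 (hc2 i j fun h => hne (by rw [h])) (hq i e he) (hq j e he')
      · rw [← Set.image_univ, Set.ncard_image_of_injective _ hinj, Set.ncard_univ]
        simp
end

section
/- A (possibly infinite) graph G is Eulerian, i.e. its edge set can be partitioned into edge sets of cycles, if and only if G contains no cut of odd size (infinite cardinals are considered neither odd nor even). -/
/-!
Common definitions: multigraphs (parallel edges allowed, no loops), walks,
paths, cuts, waves and related notions used in the statements below.
-/

universe u v

namespace Multigraph
namespace NW

variable {V : Type u} {E : Type v} (G : Multigraph V E)

/-- No odd cut in the subgraph with edge set `S`. -/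
def NoOdd (S : Set E) : Prop := ∀ X : Set V, (G.cut X ∩ S).Finite → Even (G.cut X ∩ S).ncard

/-- Adjacency via an edge of `S`. -/
def AdjIn (S : Set E) (x y : V) : Prop := ∃ e ∈ S, G.inc e = s(x, y)

/-- Reachability via edges of `S`. -/
def Reach (S : Set E) : V → V → Prop := Relation.ReflTransGen (AdjIn G S)

/-- Vertices covered by `S`. -/
def VS (S : Set E) : Set V := {v | ∃ e ∈ S, v ∈ G.inc e}

variable {G}

theorem mem_cut {e : E} {x y : V} (h : G.inc e = s(x, y)) (X : Set V) :
    e ∈ G.cut X ↔ ((x ∈ X ∧ y ∉ X) ∨ (y ∈ X ∧ x ∉ X)) := by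
  constructor
  · rintro ⟨a, b, hab, ha, hb⟩
    rw [h, Sym2.eq_iff] at hab
    rcases hab with ⟨rfl, rfl⟩ | ⟨rfl, rfl⟩
    · exact Or.inl ⟨ha, hb⟩
    · exact Or.inr ⟨ha, hb⟩
  · rintro (⟨hx, hy⟩ | ⟨hy, hx⟩)
    · exact ⟨x, y, h, hx, hy⟩
    · exact ⟨y, x, h.trans Sym2.eq_swap, hy, hx⟩

theorem Reach.mono {S T : Set E} (h : S ⊆ T) {x y : V} (r : Reach G S x y) : Reach G T x y :=
  by
  induction r with
  | refl => exact .refl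
  | tail _ h' ih =>
    obtain ⟨e, he, h'⟩ := h'
    exact Relation.ReflTransGen.tail ih ⟨e, h he, h'⟩

theorem AdjIn.symm {S : Set E} {x y : V} (h : AdjIn G S x y) : AdjIn G S y x := by
  obtain ⟨e, he, h⟩ := h
  exact ⟨e, he, h.trans Sym2.eq_swap⟩

theorem Reach.symm {S : Set E} {x y : V} (r : Reach G S x y) : Reach G S y x := by
  induction r with
  | refl => exact .refl
  | tail _ h ih => exact Relation.ReflTransGen.head h.symm ih

theorem Reach.cross {S : Set E} {x y : V} (r : Reach G S x y) {X : Set V} (hx : x ∈ X)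
    (hy : y ∉ X) : ∃ e ∈ S, e ∈ G.cut X := by
  induction r with
  | refl => exact absurd hx hy
  | @tail b c _ h ih =>
    by_cases hb : b ∈ X
    · obtain ⟨e, he, h⟩ := h
      exact ⟨e, he, b, c, h, hb, hy⟩
    · exact ih hb

theorem Reach.finset {S : Set E} {x y : V} (r : Reach G S x y) :
    ∃ F : Finset E, (F : Set E) ⊆ S ∧ Reach G (F : Set E) x y := by
  classical
  induction r with
  | refl => exact ⟨∅, by simp, .refl⟩
  | @tail b c _ h ih =>
    obtain ⟨F, hF, r⟩ := ih
    obtain ⟨e, he, h⟩ := h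
    refine ⟨insert e F, ?_, ?_⟩
    · intro a ha
      rcases Finset.mem_insert.1 (Finset.mem_coe.1 ha) with rfl | h
      · exact he
      · exact hF h
    · exact Relation.ReflTransGen.tail (Reach.mono (by simp) r) ⟨e, by simp, h⟩

/-- Reflection lemma. -/
theorem noOdd_of_reflect {R D : Set E} (hR : NoOdd G R) (hD : D ⊆ R)
    (h : ∀ F : Finset E, (F : Set E) ⊆ D → ∀ x ∈ VS G D, ∀ y ∈ VS G D,
      Reach G (R \ F) x y → Reach G (D \ F) x y) : NoOdd G D := by
  intro X hfin
  obtain ⟨F, hF⟩ := hfin.exists_finset_coe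
  set X' : Set V := {v | ∃ w ∈ X ∩ VS G D, Reach G (R \ F) w v} with hX'
  have key : G.cut X' ∩ R = G.cut X ∩ D := by
    apply Set.Subset.antisymm
    · rintro e ⟨⟨x, y, hxy, ⟨w, hw, r⟩, hy⟩, heR⟩
      by_contra hne
      apply hy
      refine ⟨w, hw, Relation.ReflTransGen.tail r ⟨e, ⟨heR, ?_⟩, hxy⟩⟩
      rwa [hF]
    · rintro e ⟨⟨x, y, hxy, hx, hy⟩, heD⟩
      have hxW : x ∈ VS G D := ⟨e, heD, by rw [hxy]; simp⟩
      have hyW : y ∈ VS G D := ⟨e, heD, by rw [hxy]; simp⟩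
      refine ⟨⟨x, y, hxy, ⟨x, ⟨hx, hxW⟩, .refl⟩, ?_⟩, hD heD⟩
      rintro ⟨w, ⟨hwX, hwW⟩, r⟩
      have r' := h F (by rw [hF]; exact Set.inter_subset_right) w hwW y hyW r
      obtain ⟨f, hf, hfc⟩ := r'.cross hwX hy
      apply hf.2
      rw [hF]
      exact ⟨hfc, hf.1⟩
  rw [← key]
  apply hR
  rw [key]
  exact hfin

/-- Removal lemma. -/
theorem noOdd_diff {S U : Set E} (hS : NoOdd G S)
    (h : ∀ x ∈ VS G U, ∀ y ∈ VS G U, x ≠ y → Reach G (S \ U) x y →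
      ∃ P : Set (Finset E), P.Infinite ∧ P.PairwiseDisjoint id ∧
        ∀ F ∈ P, (F : Set E) ⊆ S \ U ∧ Reach G (F : Set E) x y) : NoOdd G (S \ U) := by
  intro X hfin
  have nr : ∀ x ∈ VS G U, ∀ y ∈ VS G U, x ∈ X → y ∉ X → ¬ Reach G (S \ U) x y := by
    intro x hx y hy hxX hyX r
    obtain ⟨P, hPi, hPd, hP⟩ := h x hx y hy (by rintro rfl; exact hyX hxX) r
    have : ∀ F : Finset E, ∃ e, F ∈ P → e ∈ F ∧ e ∈ G.cut X ∩ (S \ U) := by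
      intro F
      by_cases hF : F ∈ P
      · obtain ⟨e, he, hc⟩ := (hP F hF).2.cross hxX hyX
        exact ⟨e, fun _ => ⟨he, hc, (hP F hF).1 he⟩⟩
      · obtain ⟨e, _⟩ := r.cross hxX hyX
        exact ⟨e, fun h => absurd h hF⟩
    choose f hf using this
    apply hPi
    refine Set.Finite.of_finite_image (f := f) (hfin.subset ?_) ?_
    · rintro _ ⟨F, hF, rfl⟩
      exact (hf F hF).2
    · intro F hF F' hF' heq
      by_contra hne
      have := hPd hF hF' hne
      exact Finset.disjoint_left.1 this (hf F hF).1 (heq ▸ (hf F' hF').1)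
  set Z : Set V := {v | ∃ w ∈ VS G U ∩ X, Reach G (S \ U) w v} with hZ
  have hZe : ∀ e ∈ S \ U, ∀ x y, G.inc e = s(x, y) → (x ∈ Z ↔ y ∈ Z) := by
    intro e he x y hxy
    constructor
    · rintro ⟨w, hw, r⟩
      exact ⟨w, hw, r.tail ⟨e, he, hxy⟩⟩
    · rintro ⟨w, hw, r⟩
      exact ⟨w, hw, r.tail ⟨e, he, hxy.trans Sym2.eq_swap⟩⟩
  have hW1 : ∀ v ∈ VS G U, v ∉ X \ Z := fun v hv hx => hx.2 ⟨v, ⟨hv, hx.1⟩, .refl⟩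
  have hW2 : ∀ v ∈ VS G U, v ∉ Z \ X := by
    rintro v hv ⟨⟨w, hw, r⟩, hx⟩
    exact nr w hw.1 v hv hw.2 hx r
  have hU : ∀ Y : Set V, (∀ v ∈ VS G U, v ∉ Y) → G.cut Y ∩ S ⊆ S \ U := by
    rintro Y hY e ⟨⟨x, y, hxy, hx, -⟩, heS⟩
    exact ⟨heS, fun heU => hY x ⟨e, heU, by rw [hxy]; simp⟩ hx⟩
  have hun : (G.cut (X \ Z) ∩ S) ∪ (G.cut (Z \ X) ∩ S) = G.cut X ∩ (S \ U) := by
    ext e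
    constructor
    · rintro (he | he)
      · have h1 := hU _ hW1 he
        obtain ⟨⟨x, y, hxy, hx, hy⟩, -⟩ := he
        have := hZe e h1 x y hxy
        refine ⟨(mem_cut hxy X).2 ?_, h1⟩
        simp only [Set.mem_sdiff] at hx hy
        tauto
      · have h1 := hU _ hW2 he
        obtain ⟨⟨x, y, hxy, hx, hy⟩, -⟩ := he
        have := hZe e h1 x y hxy
        refine ⟨(mem_cut hxy X).2 ?_, h1⟩
        simp only [Set.mem_sdiff] at hx hy
        tauto
    · rintro ⟨⟨x, y, hxy, hx, hy⟩, h1⟩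
      have := hZe e h1 x y hxy
      by_cases hxZ : x ∈ Z
      · exact Or.inr ⟨(mem_cut hxy _).2 (by simp only [Set.mem_sdiff]; tauto), h1.1⟩
      · exact Or.inl ⟨(mem_cut hxy _).2 (by simp only [Set.mem_sdiff]; tauto), h1.1⟩
  have hdisj : Disjoint (G.cut (X \ Z) ∩ S) (G.cut (Z \ X) ∩ S) := by
    rw [Set.disjoint_left]
    intro e he he'
    have h1 := hU _ hW1 he
    obtain ⟨⟨x, y, hxy, hx, hy⟩, -⟩ := he
    have := hZe e h1 x y hxy
    have h2 := (mem_cut hxy _).1 he'.1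
    simp only [Set.mem_sdiff] at hx hy h2
    tauto
  have f1 : (G.cut (X \ Z) ∩ S).Finite := hfin.subset (hun ▸ Set.subset_union_left)
  have f2 : (G.cut (Z \ X) ∩ S).Finite := hfin.subset (hun ▸ Set.subset_union_right)
  rw [← hun, Set.ncard_union_eq hdisj f1 f2]
  exact (hS _ f1).add (hS _ f2)

/-! ### Walks and cycles -/

/-- `C` is the edge set of a cycle. -/
def IsCyc (G : Multigraph V E) (C : Set E) : Prop := ∃ c : G.Cycle, C = {e | e ∈ c.walk.edges}

/-- `S` decomposes into cycles. -/
def Dec (G : Multigraph V E) (S : Set E) : Prop :=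
  ∃ 𝒞 : Set (Set E), (∀ C ∈ 𝒞, IsCyc G C) ∧ 𝒞.PairwiseDisjoint id ∧ ⋃₀ 𝒞 = S

theorem walk_parity (X : Set V) [DecidablePred (· ∈ G.cut X)] {x y : V} (p : G.Walk x y) :
    Even (p.edges.countP (· ∈ G.cut X)) ↔ (x ∈ X ↔ y ∈ X) := by
  induction p with
  | nil v => simp [Walk.edges]
  | @cons a b c e he p ih =>
    simp only [Walk.edges, List.countP_cons]
    have := mem_cut he X
    by_cases h : e ∈ G.cut X
    · simp only [h, decide_true, if_true, Nat.even_add_one, ih]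
      tauto
    · simp only [h, decide_false, Bool.false_eq_true, if_false, add_zero, ih]
      tauto

theorem IsCyc.finite {C : Set E} (h : IsCyc G C) : C.Finite := by
  obtain ⟨c, rfl⟩ := h
  exact List.finite_toSet _

theorem IsCyc.even {C : Set E} (h : IsCyc G C) (X : Set V) : Even (G.cut X ∩ C).ncard := by
  classical
  obtain ⟨c, rfl⟩ := h
  have h1 : G.cut X ∩ {e | e ∈ c.walk.edges} =
      ((c.walk.edges.filter (· ∈ G.cut X)).toFinset : Set E) := by
    ext e; simp [and_comm]
  rw [h1, Set.ncard_coe_finset, List.toFinset_card_of_nodup (c.edges_nodup.filter _),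
    ← List.countP_eq_length_filter]
  exact (walk_parity X c.walk).2 Iff.rfl

theorem walk_suffix {x y z : V} (p : G.Walk x y) (hz : z ∈ p.support) :
    ∃ q : G.Walk z y, q.support <:+ p.support ∧ q.edges ⊆ p.edges := by
  induction p with
  | nil v =>
    simp only [Walk.support, List.mem_singleton] at hz
    subst hz
    exact ⟨.nil z, List.suffix_refl _, by simp⟩
  | @cons a b c e he p ih =>
    simp only [Walk.support, List.mem_cons] at hz
    by_cases h : z = a
    · subst h
      exact ⟨.cons e he p, List.suffix_refl _, by simp⟩
    · obtain ⟨q, h1, h2⟩ := ih (hz.resolve_left h)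
      exact ⟨q, h1.trans (List.suffix_cons _ _), fun f hf => List.mem_cons_of_mem _ (h2 hf)⟩

theorem Reach.path {S : Set E} {x y : V} (r : Reach G S x y) :
    ∃ p : G.Walk x y, p.support.Nodup ∧ ∀ e ∈ p.edges, e ∈ S := by
  induction r using Relation.ReflTransGen.head_induction_on with
  | refl => exact ⟨.nil y, by simp [Walk.support], by simp [Walk.edges]⟩
  | @head a b h _ ih =>
    obtain ⟨p, hp, hS⟩ := ih
    obtain ⟨e, he, h⟩ := h
    by_cases ha : a ∈ p.support
    · obtain ⟨q, h1, h2⟩ := walk_suffix p ha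
      exact ⟨q, hp.sublist h1.sublist, fun f hf => hS f (h2 hf)⟩
    · refine ⟨.cons e h p, by simp [Walk.support, ha, hp], ?_⟩
      intro f hf
      rcases List.mem_cons.1 hf with rfl | hf
      · exact he
      · exact hS f hf

theorem mem_support_of_edge {x y : V} (p : G.Walk x y) {e : E} (he : e ∈ p.edges) {z : V}
    (hz : z ∈ G.inc e) : z ∈ p.support := by
  induction p with
  | nil v => simp [Walk.edges] at he
  | @cons a b c f hf p ih =>
    rcases List.mem_cons.1 he with rfl | he
    · rw [hf, Sym2.mem_iff] at hz
      rcases hz with rfl | rfl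
      · simp [Walk.support]
      · cases p <;> simp [Walk.support]
    · exact List.mem_cons_of_mem _ (ih he)

theorem edges_nodup_of_support {x y : V} (p : G.Walk x y) (h : p.support.Nodup) :
    p.edges.Nodup := by
  induction p with
  | nil v => simp [Walk.edges]
  | @cons a b c f hf p ih =>
    simp only [Walk.support, List.nodup_cons] at h
    simp only [Walk.edges, List.nodup_cons]
    refine ⟨fun hm => h.1 (mem_support_of_edge p hm (by rw [hf]; simp)), ih h.2⟩

theorem exists_cycle {S : Set E} (hS : NoOdd G S) {e : E} (he : e ∈ S) :
    ∃ C, IsCyc G C ∧ C ⊆ S ∧ e ∈ C := by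
  obtain ⟨x, y, hxy⟩ : ∃ x y, G.inc e = s(x, y) := by
    induction h : G.inc e with
    | _ x y => exact ⟨x, y, rfl⟩
  by_cases hr : Reach G (S \ {e}) y x
  · obtain ⟨p, hp, hpS⟩ := hr.path
    refine ⟨_, ⟨⟨x, .cons e hxy p, by simp [Walk.edges], ?_, ?_⟩, rfl⟩, ?_, ?_⟩
    · simp only [Walk.edges, List.nodup_cons]
      exact ⟨fun h => (hpS e h).2 rfl, edges_nodup_of_support p hp⟩
    · simpa [Walk.support] using hp
    · intro f hf
      rcases List.mem_cons.1 hf with rfl | hf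
      · exact he
      · exact (hpS f hf).1
    · simp [Walk.edges]
  · exfalso
    have key : G.cut {v | Reach G (S \ {e}) y v} ∩ S = {e} := by
      ext f
      constructor
      · rintro ⟨⟨a, b, hab, ha, hb⟩, hf⟩
        by_contra hne
        exact hb (Relation.ReflTransGen.tail ha ⟨f, ⟨hf, hne⟩, hab⟩)
      · rintro rfl
        exact ⟨(mem_cut hxy _).2 (Or.inr ⟨.refl, hr⟩), he⟩
    have := hS {v | Reach G (S \ {e}) y v} (by rw [key]; simp)
    rw [key] at this
    simp at this

theorem noOdd_diff_cycle {S C : Set E} (hS : NoOdd G S) (hC : IsCyc G C) (hCS : C ⊆ S) :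
    NoOdd G (S \ C) := by
  intro X hfin
  have hun : (G.cut X ∩ (S \ C)) ∪ (G.cut X ∩ C) = G.cut X ∩ S := by
    rw [← Set.inter_union_distrib_left, Set.sdiff_union_of_subset hCS]
  have hd : Disjoint (G.cut X ∩ (S \ C)) (G.cut X ∩ C) :=
    Set.disjoint_left.2 fun e h1 h2 => h1.2.2 h2.2
  have f2 : (G.cut X ∩ C).Finite := hC.finite.subset Set.inter_subset_right
  have h := hS X (hun ▸ hfin.union f2)
  rw [← hun, Set.ncard_union_eq hd hfin f2, Nat.even_add] at h
  exact h.2 (hC.even X)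

theorem Dec.noOdd {S : Set E} (h : Dec G S) : NoOdd G S := by
  classical
  obtain ⟨𝒞, h1, h2, rfl⟩ := h
  intro X hfin
  have : ∀ e, ∃ C, e ∈ ⋃₀ 𝒞 → C ∈ 𝒞 ∧ e ∈ C := by
    intro e
    by_cases he : e ∈ ⋃₀ 𝒞
    · obtain ⟨C, hC, heC⟩ := he
      exact ⟨C, fun _ => ⟨hC, heC⟩⟩
    · exact ⟨∅, fun h => absurd h he⟩
  choose f hf using this
  obtain ⟨F, hF⟩ := hfin.exists_finset_coe
  rw [← hF, Set.ncard_coe_finset, Finset.card_eq_sum_card_image f]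
  refine Finset.even_sum _ fun C hC => ?_
  obtain ⟨e, he, rfl⟩ := Finset.mem_image.1 hC
  have hm : ∀ a, a ∈ F ↔ a ∈ G.cut X ∩ ⋃₀ 𝒞 := fun a => by rw [← hF]; simp
  have hC := (hf e ((hm e).1 he).2).1
  have : ((F.filter fun a => f a = f e : Finset E) : Set E) = G.cut X ∩ f e := by
    ext a
    simp only [Finset.coe_filter, Set.mem_ofPred_eq, hm]
    constructor
    · rintro ⟨ha, hae⟩
      exact ⟨ha.1, hae ▸ (hf a ha.2).2⟩
    · rintro ⟨ha, hae⟩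
      have ha' : a ∈ ⋃₀ 𝒞 := ⟨_, hC, hae⟩
      refine ⟨⟨ha, ha'⟩, ?_⟩
      by_contra hne
      exact Set.disjoint_left.1 (h2 (hf a ha').1 hC hne) (hf a ha').2 hae
  rw [← Set.ncard_coe_finset, this]
  exact (h1 _ hC).even X

theorem dec_iUnion {ι : Type*} (D : ι → Set E) (hd : Pairwise fun i j => Disjoint (D i) (D j))
    (h : ∀ i, Dec G (D i)) : Dec G (⋃ i, D i) := by
  choose 𝒞 h1 h2 h3 using h
  refine ⟨⋃ i, 𝒞 i, ?_, ?_, ?_⟩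
  · intro C hC
    obtain ⟨i, hi⟩ := Set.mem_iUnion.1 hC
    exact h1 i C hi
  · intro C hC C' hC' hne
    obtain ⟨i, hi⟩ := Set.mem_iUnion.1 hC
    obtain ⟨j, hj⟩ := Set.mem_iUnion.1 hC'
    by_cases hij : i = j
    · subst hij
      exact h2 i hi hj hne
    · refine (hd hij).mono ?_ ?_
      · rw [← h3 i]; exact Set.subset_sUnion_of_mem hi
      · rw [← h3 j]; exact Set.subset_sUnion_of_mem hj
  · rw [Set.sUnion_iUnion]
    exact Set.iUnion_congr h3

theorem dec_empty : Dec G ∅ := ⟨∅, by simp, by simp, by simp⟩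

theorem IsCyc.dec {C : Set E} (h : IsCyc G C) : Dec G C :=
  ⟨{C}, by simpa using h, by simp, by simp⟩

theorem disjoint_layers {ι : Type*} [LinearOrder ι] (A : ι → Set E) :
    Pairwise fun i j => Disjoint (A i \ ⋃ k : Set.Iio i, A k) (A j \ ⋃ k : Set.Iio j, A k) := by
  intro i j hij
  rw [Set.disjoint_left]
  rintro e ⟨h1, h2⟩ ⟨h3, h4⟩
  rcases lt_or_gt_of_ne hij with h | h
  · exact h4 (Set.mem_iUnion.2 ⟨⟨i, h⟩, h1⟩)
  · exact h2 (Set.mem_iUnion.2 ⟨⟨j, h⟩, h3⟩)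

theorem iUnion_layers {ι : Type*} [LinearOrder ι] [WellFoundedLT ι] (A : ι → Set E) :
    ⋃ i, (A i \ ⋃ k : Set.Iio i, A k) = ⋃ i, A i := by
  apply Set.Subset.antisymm
  · exact Set.iUnion_mono fun i => Set.sdiff_subset
  · refine Set.iUnion_subset fun i => ?_
    induction i using WellFoundedLT.induction with
    | _ i ih =>
      intro e he
      by_cases h : e ∈ ⋃ k : Set.Iio i, A k
      · obtain ⟨k, hk⟩ := Set.mem_iUnion.1 h
        exact ih k k.2 hk
      · exact Set.mem_iUnion.2 ⟨i, he, h⟩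

theorem dec_countable {S : Set E} (hc : S.Countable) (hS : NoOdd G S) : Dec G S := by
  classical
  rcases S.eq_empty_or_nonempty with rfl | hne
  · exact dec_empty
  obtain ⟨f, rfl⟩ := hc.exists_eq_range hne
  set S := Set.range f
  have step : ∀ (U : Set E) (n : ℕ), ∃ C : Set E, (U ⊆ S ∧ NoOdd G (S \ U)) →
      (C ⊆ S \ U ∧ f n ∈ U ∪ C ∧ (C = ∅ ∨ IsCyc G C)) := by
    intro U n
    by_cases h : U ⊆ S ∧ NoOdd G (S \ U)
    · by_cases hn : f n ∈ U
      · exact ⟨∅, fun _ => ⟨by simp, Or.inl hn, Or.inl rfl⟩⟩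
      · obtain ⟨C, h1, h2, h3⟩ := exists_cycle h.2 (e := f n) ⟨⟨n, rfl⟩, hn⟩
        exact ⟨C, fun _ => ⟨h2, Or.inr h3, Or.inr h1⟩⟩
    · exact ⟨∅, fun h' => absurd h' h⟩
  choose c hc using step
  let U : ℕ → Set E := fun n => Nat.rec ∅ (fun k W => W ∪ c W k) n
  have hU : ∀ n, U n ⊆ S ∧ NoOdd G (S \ U n) := by
    intro n
    induction n with
    | zero => exact ⟨Set.empty_subset _, by simpa [U] using hS⟩
    | succ n ih =>
      obtain ⟨h1, h2, h3⟩ := hc (U n) n ih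
      change U n ∪ c (U n) n ⊆ S ∧ NoOdd G (S \ (U n ∪ c (U n) n))
      refine ⟨Set.union_subset ih.1 (h1.trans Set.sdiff_subset), ?_⟩
      rw [← Set.sdiff_sdiff]
      rcases h3 with h3 | h3
      · rw [h3]; simpa using ih.2
      · exact noOdd_diff_cycle ih.2 h3 h1
  have hmono : Monotone U := monotone_nat_of_le_succ fun n => Set.subset_union_left
  have hun : ⋃ n, c (U n) n = S := by
    apply Set.Subset.antisymm
    · exact Set.iUnion_subset fun n => (hc _ n (hU n)).1.trans Set.sdiff_subset
    · rintro _ ⟨n, rfl⟩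
      have : ∀ m, U m ⊆ ⋃ n, c (U n) n := by
        intro m
        induction m with
        | zero => exact Set.empty_subset _
        | succ m ih => exact Set.union_subset ih (Set.subset_iUnion (fun n => c (U n) n) m)
      exact this (n+1) (hc _ n (hU n)).2.1
  rw [← hun]
  refine dec_iUnion _ ?_ ?_
  · have : ∀ m n, m < n → Disjoint (c (U m) m) (c (U n) n) := by
      intro m n hmn
      rw [Set.disjoint_left]
      intro e h1 h2
      exact ((hc _ n (hU n)).1 h2).2 (hmono (Nat.succ_le_of_lt hmn) (Or.inr h1))
    intro m n hmn
    rcases lt_or_gt_of_ne hmn with h | h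
    · exact this m n h
    · exact (this n m h).symm
  · intro n
    rcases (hc _ n (hU n)).2.2 with h | h
    · rw [h]; exact dec_empty
    · exact h.dec

/-! ### Closures -/

open Cardinal

theorem mk_iUnion_le_of_le {α ι : Type v} (f : ι → Set α) {μ : Cardinal.{v}} (hμ : ℵ₀ ≤ μ)
    (hι : #ι ≤ μ) (hf : ∀ i, #(f i) ≤ μ) : #(⋃ i, f i) ≤ μ := by
  refine (mk_iUnion_le f).trans ?_
  exact (mul_le_mul' hι (ciSup_le' hf)).trans (mul_eq_self hμ).le

theorem mk_finset_le {α : Type v} {μ : Cardinal.{v}} (hμ : ℵ₀ ≤ μ) (h : #α ≤ μ) :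
    #(Finset α) ≤ μ := by
  rcases finite_or_infinite α with hα | hα
  · exact (mk_le_aleph0 (α := Finset α)).trans hμ
  · rw [mk_finset_of_infinite]; exact h

theorem exists_closure (φ : Finset E → Set E) (hφ : ∀ F, (φ F).Countable) (S₀ : Set E) :
    ∃ T : Set E, S₀ ⊆ T ∧ (∀ F : Finset E, (F : Set E) ⊆ T → φ F ⊆ T) ∧
      (∀ S, S₀ ⊆ S → (∀ F, φ F ⊆ S) → T ⊆ S) ∧
      ∀ μ : Cardinal.{v}, ℵ₀ ≤ μ → #S₀ ≤ μ → #T ≤ μ := by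
  classical
  let next : Set E → Set E := fun W => W ∪ ⋃ F : Finset W, φ (F.image Subtype.val)
  let T : ℕ → Set E := fun n => Nat.rec S₀ (fun _ W => next W) n
  have hmono : Monotone T := monotone_nat_of_le_succ fun n => Set.subset_union_left
  refine ⟨⋃ n, T n, Set.subset_iUnion T 0, ?_, ?_, ?_⟩
  · intro F hF
    obtain ⟨n, hn⟩ : ∃ n : ℕ, (F : Set E) ⊆ T n := by
      have := (hmono.directed_le).exists_mem_subset_of_finset_subset_biUnion (s := F) (by simpa using hF)
      simpa using this
    refine Set.Subset.trans ?_ (Set.subset_iUnion T (n+1))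
    intro e he
    have key : ∃ F' : Finset (↥(T n)), F'.image Subtype.val = F := by
      refine ⟨F.attach.image (fun z => (⟨z.1, hn z.2⟩ : ↥(T n))), ?_⟩
      rw [Finset.image_image]
      exact Finset.attach_image_val
    obtain ⟨F', hF'⟩ := key
    refine Or.inr (Set.mem_iUnion.2 ⟨F', ?_⟩)
    change e ∈ φ (F'.image Subtype.val)
    rwa [hF']
  · intro S h0 hS
    refine Set.iUnion_subset fun n => ?_
    induction n with
    | zero => exact h0
    | succ n ih => exact Set.union_subset ih (Set.iUnion_subset fun F => hS _)
  · intro μ hμ h0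
    have hT : ∀ n : ℕ, #(↥(T n)) ≤ μ := by
      intro n
      induction n with
      | zero => exact h0
      | succ n ih =>
        refine (mk_union_le _ _).trans (add_le_of_le hμ ih ?_)
        refine mk_iUnion_le_of_le _ hμ (mk_finset_le hμ ih) fun F => ?_
        exact (le_aleph0_iff_set_countable.2 (hφ _)).trans hμ
    have : (⋃ n, T n) = ⋃ n : ULift.{v} ℕ, T n.down := by
      ext e; simp
    rw [this]
    exact mk_iUnion_le_of_le _ hμ (by simpa using hμ) fun n => hT _

theorem exists_enum {ι α : Type v} [LinearOrder ι] [WellFoundedLT ι] (P : Set α) (a : α) :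
    ∃ p : ι → α, (∀ j, p j ∈ P ∨ p j = a) ∧
      ∀ i, #P ≤ #(Set.Iio i) → ∀ F ∈ P, ∃ j < i, p j = F := by
  classical
  by_cases h : ∃ i : ι, #P ≤ #(Set.Iio i)
  · obtain ⟨i, hi, hmin⟩ := WellFounded.has_min (wellFounded_lt (α := ι)) {i : ι | #P ≤ #(Set.Iio i)} h
    obtain ⟨g⟩ := Cardinal.le_def _ _ |>.1 hi
    refine ⟨Function.extend (fun F : P => (g F : ι)) (fun F => (F : α)) (fun _ => a), ?_, ?_⟩
    · intro j
      by_cases hj : ∃ F : P, (g F : ι) = j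
      · obtain ⟨F, rfl⟩ := hj
        left
        rw [Function.Injective.extend_apply (fun x y hxy => g.injective (Subtype.ext hxy))]
        exact F.2
      · right
        rw [Function.extend_apply' _ _ _ hj]
    · intro k hk F hF
      refine ⟨g ⟨F, hF⟩, (g ⟨F, hF⟩).2.trans_le (not_lt.1 (hmin k hk)), ?_⟩
      exact Function.Injective.extend_apply (f := fun F : P => (g F : ι))
        (fun x y hxy => g.injective (Subtype.ext hxy)) _ _ ⟨F, hF⟩
  · exact ⟨fun _ => a, fun _ => Or.inr rfl, fun i hi => absurd ⟨i, hi⟩ h⟩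

theorem exists_maxFamily (G : Multigraph V E) (S : Set E) (x y : V) : ∃ P : Set (Finset E),
    P.PairwiseDisjoint id ∧ (∀ F ∈ P, (F : Set E) ⊆ S ∧ Reach G (F : Set E) x y) ∧
    ∀ F : Finset E, (F : Set E) ⊆ S → Reach G (F : Set E) x y → (∀ F' ∈ P, Disjoint F F') →
      F ∈ P := by
  obtain ⟨P, hP⟩ := zorn_subset {P : Set (Finset E) | P.PairwiseDisjoint id ∧
    (∀ F ∈ P, (F : Set E) ⊆ S ∧ Reach G (F : Set E) x y)} (by
      intro c hc hchain
      refine ⟨⋃₀ c, ⟨?_, ?_⟩, fun s hs => Set.subset_sUnion_of_mem hs⟩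
      · exact (Set.pairwiseDisjoint_sUnion hchain.directedOn).2 fun s hs => (hc hs).1
      · rintro F ⟨s, hs, hF⟩
        exact (hc hs).2 F hF)
  refine ⟨P, hP.1.1, hP.1.2, ?_⟩
  intro F hF r hd
  have : insert F P ⊆ P := hP.2 (y := insert F P) ⟨?_, ?_⟩ (Set.subset_insert _ _)
  · exact this (Set.mem_insert _ _)
  · exact hP.1.1.insert fun F' hF' _ => hd F' hF'
  · rintro F' (rfl | h)
    · exact ⟨hF, r⟩
    · exact hP.1.2 F' h

theorem exists_labels (G : Multigraph V E) (S : Set E) {ι : Type v} [LinearOrder ι]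
    [WellFoundedLT ι] (f : ι → E) (hf : Function.Injective f) :
    ∃ c : V → V → E → Set E, (∀ x y e, (c x y e).Countable) ∧ (∀ x y e, c x y e ⊆ S) ∧
      ∀ (U : Set E) (i : ι), (∀ j < i, f j ∈ U) → #U ≤ max ℵ₀ #(Set.Iio i) →
      (∀ x ∈ VS G U, ∀ y ∈ VS G U, ∀ e ∈ U, c x y e ⊆ U) →
      ∀ x ∈ VS G U, ∀ y ∈ VS G U, x ≠ y → Reach G (S \ U) x y →
        ∃ P : Set (Finset E), P.Infinite ∧ P.PairwiseDisjoint id ∧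
        ∀ F ∈ P, (F : Set E) ⊆ S \ U ∧ Reach G (F : Set E) x y := by
  classical
  choose P hPd hPr hPm using exists_maxFamily G S
  choose p hp hpe using fun x y => exists_enum (ι := ι) (P x y) ∅
  let cc : V → V → Set E := fun x y => if (P x y).Countable then ⋃ F ∈ P x y, (F : Set E) else ∅
  let q : V → V → E → Finset E := fun x y => Function.extend f (p x y) (fun _ => ∅)
  have hq : ∀ x y e, q x y e ∈ P x y ∨ q x y e = ∅ := by
    intro x y e
    by_cases he : ∃ j, f j = e
    · obtain ⟨j, rfl⟩ := he
      simp only [q, hf.extend_apply]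
      exact hp x y j
    · right
      exact Function.extend_apply' _ _ _ he
  refine ⟨fun x y e => q x y e ∪ cc x y, ?_, ?_, ?_⟩
  · intro x y e
    refine (Finset.countable_toSet _).union ?_
    simp only [cc]
    split_ifs with h
    · exact h.biUnion fun F _ => Finset.countable_toSet _
    · exact Set.countable_empty
  · intro x y e
    refine Set.union_subset ?_ ?_
    · rcases hq x y e with h | h
      · exact (hPr x y _ h).1
      · rw [h]; simp
    · simp only [cc]
      split_ifs with h
      · exact Set.iUnion₂_subset fun F hF => (hPr x y F hF).1
      · exact Set.empty_subset _
  · intro U i hfU hU hcl x hx y hy hxy hr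
    have hne : ∀ F : Finset E, Reach G (F : Set E) x y → F.Nonempty := by
      intro F r
      obtain ⟨e, he, _⟩ := r.cross (X := {x}) rfl (by simpa using hxy.symm)
      exact ⟨e, he⟩
    by_cases hsmall : #(P x y) ≤ max ℵ₀ #(Set.Iio i)
    · exfalso
      have hall : ∀ F ∈ P x y, (F : Set E) ⊆ U := by
        intro F hF
        rcases le_max_iff.1 hsmall with h | h
        · have hcount : (P x y).Countable := le_aleph0_iff_set_countable.1 h
          obtain ⟨e, he, _⟩ := id hx
          refine Set.Subset.trans ?_ (hcl x hx y hy e he)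
          refine Set.Subset.trans ?_ Set.subset_union_right
          simp only [cc, if_pos hcount]
          exact Set.subset_biUnion_of_mem (u := fun F : Finset E => (F : Set E)) hF
        · obtain ⟨j, hj, rfl⟩ := hpe x y i h F hF
          refine Set.Subset.trans ?_ (hcl x hx y hy (f j) (hfU j hj))
          refine Set.Subset.trans ?_ Set.subset_union_left
          simp only [q, hf.extend_apply]
          exact subset_rfl
      obtain ⟨F, hF, r⟩ := hr.finset
      have hFP := hPm x y F (hF.trans Set.sdiff_subset) r fun F' hF' =>
        Finset.disjoint_left.2 fun e he he' => (hF he).2 (hall F' hF' he')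
      obtain ⟨e, he⟩ := hne F r
      exact (hF he).2 (hall F hFP he)
    · refine ⟨{F ∈ P x y | (F : Set E) ⊆ S \ U}, ?_, ?_, ?_⟩
      · intro hfin
        apply hsmall
        have hμ : ℵ₀ ≤ max ℵ₀ #(Set.Iio i) := le_max_left _ _
        have hsub : P x y ⊆ {F ∈ P x y | (F : Set E) ⊆ S \ U} ∪
            {F ∈ P x y | ∃ e ∈ F, e ∈ U} := by
          intro F hF
          by_cases h : ∃ e ∈ F, e ∈ U
          · exact Or.inr ⟨hF, h⟩
          · exact Or.inl ⟨hF, fun e he => ⟨(hPr x y F hF).1 he, fun heU => h ⟨e, he, heU⟩⟩⟩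
        refine (mk_le_mk_of_subset hsub).trans ((mk_union_le _ _).trans (add_le_of_le hμ ?_ ?_))
        · exact (le_aleph0_iff_set_countable.2 hfin.countable).trans hμ
        · refine le_trans ?_ hU
          choose g hg using fun F : {F ∈ P x y | ∃ e ∈ F, e ∈ U} => F.2.2
          refine mk_le_of_injective (f := fun F => (⟨g F, (hg F).2⟩ : U)) ?_
          intro F F' hFF'
          have h1 : g F = g F' := congrArg Subtype.val hFF'
          by_contra hne'
          have := hPd x y F.2.1 F'.2.1 (fun h => hne' (Subtype.ext h))
          exact Finset.disjoint_left.1 this (hg F).1 (h1 ▸ (hg F').1)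
      · exact (hPd x y).subset fun F hF => hF.1
      · exact fun F hF => ⟨hF.2, (hPr x y F hF.1).2⟩

theorem VS_finite (F : Finset E) : (VS G (F : Set E)).Finite := by
  have : VS G (F : Set E) = ⋃ e ∈ F, {v | v ∈ G.inc e} := by
    ext v; simp [VS]
  rw [this]
  refine F.finite_toSet.biUnion fun e _ => ?_
  induction G.inc e with
  | _ x y => exact (Set.toFinite {x, y}).subset fun v hv => by simpa using hv

theorem VS_mono {S T : Set E} (h : S ⊆ T) : VS G S ⊆ VS G T :=
  fun _ ⟨e, he, hv⟩ => ⟨e, h he, hv⟩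

/-- The inductive step at each stage. -/
theorem exists_step (G : Multigraph V E) (S : Set E) (c : V → V → E → Set E)
    (hc : ∀ x y e, (c x y e).Countable) (hcS : ∀ x y e, c x y e ⊆ S) (U : Set E) (a : E) :
    ∃ T : Set E, U ⊆ T ∧ a ∈ T ∧ (U ⊆ S → a ∈ S → T ⊆ S) ∧
      (∀ x ∈ VS G T, ∀ y ∈ VS G T, ∀ e ∈ T, c x y e ⊆ T) ∧
      (∀ F : Finset E, (F : Set E) ⊆ T \ U → ∀ x ∈ VS G (T \ U), ∀ y ∈ VS G (T \ U),
        Reach G ((S \ U) \ F) x y → Reach G ((T \ U) \ F) x y) ∧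
      ∀ μ : Cardinal.{v}, ℵ₀ ≤ μ → #U ≤ μ → #T ≤ μ := by
  classical
  have hq : ∀ (F : Finset E) (x y : V), ∃ Q : Finset E, (Q : Set E) ⊆ (S \ U) \ F ∧
      (Reach G ((S \ U) \ F) x y → Reach G (Q : Set E) x y) := by
    intro F x y
    by_cases h : Reach G ((S \ U) \ F) x y
    · obtain ⟨Q, h1, h2⟩ := h.finset
      exact ⟨Q, h1, fun _ => h2⟩
    · exact ⟨∅, by simp, fun h' => absurd h' h⟩
  choose q hqS hqr using hq
  let φ : Finset E → Set E := fun F => ⋃ x ∈ VS G (F : Set E), ⋃ y ∈ VS G (F : Set E),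
    ((⋃ e ∈ F, c x y e) ∪ ⋃ F' ∈ F.powerset, (q F' x y : Set E))
  have hφ : ∀ F, (φ F).Countable := by
    intro F
    refine (VS_finite F).countable.biUnion fun x _ => (VS_finite F).countable.biUnion fun y _ => ?_
    refine Set.Countable.union ?_ ?_
    · exact F.countable_toSet.biUnion fun e _ => hc x y e
    · exact F.powerset.countable_toSet.biUnion fun e _ => Finset.countable_toSet _
  have hφS : ∀ F, φ F ⊆ S := by
    intro F
    refine Set.iUnion₂_subset fun x _ => Set.iUnion₂_subset fun y _ => Set.union_subset ?_ ?_
    · exact Set.iUnion₂_subset fun e _ => hcS x y e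
    · exact Set.iUnion₂_subset fun F' _ => (hqS F' x y).trans
        (Set.sdiff_subset.trans Set.sdiff_subset)
  obtain ⟨T, h0, h1, h2, h3⟩ := exists_closure φ hφ (insert a U)
  refine ⟨T, (Set.subset_insert _ _).trans h0, h0 (Set.mem_insert _ _), ?_, ?_, ?_, ?_⟩
  · exact fun hU ha => h2 S (Set.insert_subset ha hU) hφS
  · rintro x ⟨e₁, he₁, hx⟩ y ⟨e₂, he₂, hy⟩ e he
    have := h1 {e₁, e₂, e} (by
      intro b hb
      simp only [Finset.coe_insert, Finset.coe_singleton, Set.mem_insert_iff,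
        Set.mem_singleton_iff] at hb
      rcases hb with rfl | rfl | rfl <;> assumption)
    refine Set.Subset.trans ?_ this
    intro b hb
    refine Set.mem_iUnion₂.2 ⟨x, ⟨e₁, by simp, hx⟩, Set.mem_iUnion₂.2 ⟨y, ⟨e₂, by simp, hy⟩, ?_⟩⟩
    exact Or.inl (Set.mem_iUnion₂.2 ⟨e, by simp, hb⟩)
  · rintro F hF x ⟨e₁, he₁, hx⟩ y ⟨e₂, he₂, hy⟩ r
    have := h1 (insert e₁ (insert e₂ F)) (by
      intro b hb
      simp only [Finset.coe_insert, Set.mem_insert_iff] at hb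
      rcases hb with rfl | rfl | hb
      · exact he₁.1
      · exact he₂.1
      · exact (hF hb).1)
    refine (hqr F x y r).mono ?_
    intro b hb
    have hb' := hqS F x y hb
    refine ⟨⟨this ?_, hb'.1.2⟩, hb'.2⟩
    refine Set.mem_iUnion₂.2 ⟨x, ⟨e₁, by simp, hx⟩, Set.mem_iUnion₂.2 ⟨y, ⟨e₂, by simp, hy⟩, ?_⟩⟩
    refine Or.inr (Set.mem_iUnion₂.2 ⟨F, ?_, hb⟩)
    rw [Finset.mem_powerset]
    intro z hz
    simp [hz]
  · intro μ hμ hU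
    refine h3 μ hμ (mk_insert_le.trans (add_le_of_le hμ hU ?_))
    exact one_lt_aleph0.le.trans hμ

theorem exists_chain {ι : Type v} [LinearOrder ι] [WellFoundedLT ι] (step : Set E → ι → Set E) :
    ∃ A : ι → Set E, ∀ i, A i = step (⋃ k : Set.Iio i, A k) i := by
  refine ⟨WellFoundedLT.fix (motive := fun _ => Set E)
    (fun i rec => step (⋃ k : Set.Iio i, rec k.1 k.2) i), fun i => ?_⟩
  rw [WellFoundedLT.fix_eq]

theorem dec_of_noOdd (κ : Cardinal.{v}) : ∀ S : Set E, #S = κ → NoOdd G S → Dec G S := by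
  induction κ using WellFoundedLT.induction with
  | _ κ ih =>
  intro S hκ hS
  by_cases hcount : κ ≤ ℵ₀
  · exact dec_countable (le_aleph0_iff_set_countable.1 (hκ ▸ hcount)) hS
  rw [not_le] at hcount
  let ι := κ.ord.ToType
  have hι : #ι = κ := by simp [ι]
  have hIio : ∀ i : ι, #(Set.Iio i) < κ := by
    intro i
    have := mk_Iio_lt i (by simp [ι])
    rwa [hι] at this
  obtain ⟨f₀⟩ : Nonempty (ι ≃ S) := Cardinal.eq.1 (hι.trans hκ.symm)
  let f : ι → E := fun i => f₀ i
  have hf : Function.Injective f := Subtype.val_injective.comp f₀.injective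
  have hfS : ∀ i, f i ∈ S := fun i => (f₀ i).2
  obtain ⟨c, hc, hcS, hkey⟩ := exists_labels G S f hf
  choose step s1 s2 s3 s4 s5 s6 using exists_step G S c hc hcS
  obtain ⟨A, hA⟩ := exists_chain (ι := ι) (fun U i => step U (f i))
  set U : ι → Set E := fun i => ⋃ k : Set.Iio i, A k with hU
  have hA' : ∀ i, A i = step (U i) (f i) := hA
  have hUA : ∀ i, U i ⊆ A i := fun i => by rw [hA' i]; exact s1 _ _
  have hmono : Monotone A := by
    intro i j hij
    rcases hij.eq_or_lt with rfl | h
    · exact subset_rfl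
    · exact Set.Subset.trans (Set.subset_iUnion (fun k : Set.Iio j => A k) ⟨i, h⟩) (hUA j)
  have hfA : ∀ i, f i ∈ A i := fun i => by rw [hA' i]; exact s2 _ _
  have hAS : ∀ i, A i ⊆ S := by
    intro i
    induction i using WellFoundedLT.induction with
    | _ i ihi =>
      rw [hA' i]
      exact s3 _ _ (Set.iUnion_subset fun k => ihi k k.2) (hfS i)
  have hcardA : ∀ i, #(A i) ≤ max ℵ₀ #(Set.Iio i) ∧ #(U i) ≤ max ℵ₀ #(Set.Iio i) := by
    intro i
    induction i using WellFoundedLT.induction with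
    | _ i ihi =>
      have h2 : #(U i) ≤ max ℵ₀ #(Set.Iio i) := by
        refine mk_iUnion_le_of_le _ (le_max_left _ _) (le_max_right _ _) fun k => ?_
        refine (ihi k k.2).1.trans (max_le_max le_rfl (mk_le_mk_of_subset ?_))
        exact Set.Iio_subset_Iio k.2.le
      refine ⟨?_, h2⟩
      rw [hA' i]
      exact s6 _ _ _ (le_max_left _ _) h2
  have hclA : ∀ i, ∀ x ∈ VS G (A i), ∀ y ∈ VS G (A i), ∀ e ∈ A i, c x y e ⊆ A i := by
    intro i
    rw [hA' i]
    exact s4 _ _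
  have hclU : ∀ i, ∀ x ∈ VS G (U i), ∀ y ∈ VS G (U i), ∀ e ∈ U i, c x y e ⊆ U i := by
    rintro i x ⟨e₁, he₁, hx⟩ y ⟨e₂, he₂, hy⟩ e he
    obtain ⟨k₁, hk₁⟩ := Set.mem_iUnion.1 he₁
    obtain ⟨k₂, hk₂⟩ := Set.mem_iUnion.1 he₂
    obtain ⟨k, hk⟩ := Set.mem_iUnion.1 he
    let m : Set.Iio i := max k₁ (max k₂ k)
    have hm₁ : A k₁ ⊆ A m := hmono (le_max_left k₁ (max k₂ k))
    have hm₂ : A k₂ ⊆ A m := hmono ((le_max_left k₂ k).trans (le_max_right k₁ (max k₂ k)))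
    have hm : A k ⊆ A m := hmono ((le_max_right k₂ k).trans (le_max_right k₁ (max k₂ k)))
    refine (hclA m x ⟨e₁, hm₁ hk₁, hx⟩ y ⟨e₂, hm₂ hk₂, hy⟩ e (hm hk)).trans ?_
    exact Set.subset_iUnion (fun k : Set.Iio i => A k) m
  have hSU : ∀ i, NoOdd G (S \ U i) := by
    intro i
    refine noOdd_diff hS (hkey (U i) i ?_ (hcardA i).2 (hclU i))
    exact fun j hj => Set.mem_iUnion.2 ⟨⟨j, hj⟩, hfA j⟩
  have hD : ∀ i, NoOdd G (A i \ U i) := by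
    intro i
    refine noOdd_of_reflect (hSU i) (Set.sdiff_subset_sdiff_left (hAS i)) ?_
    rw [hA' i]
    exact s5 _ _
  have hun : ⋃ i, (A i \ U i) = S := by
    rw [iUnion_layers A]
    apply Set.Subset.antisymm (Set.iUnion_subset hAS)
    intro e he
    refine Set.mem_iUnion.2 ⟨f₀.symm ⟨e, he⟩, ?_⟩
    have := hfA (f₀.symm ⟨e, he⟩)
    simpa [f] using this
  rw [← hun]
  refine dec_iUnion _ (disjoint_layers A) fun i => ?_
  refine ih _ ?_ _ rfl (hD i)
  refine (mk_le_mk_of_subset Set.sdiff_subset).trans_lt ((hcardA i).1.trans_lt ?_)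
  exact max_lt hcount (hIio i)

theorem isEulerian_iff : G.IsEulerian ↔ Dec G Set.univ := by
  constructor
  · rintro ⟨C, h1, h2⟩
    refine ⟨(fun c : G.Cycle => {e | e ∈ c.walk.edges}) '' C, ?_, ?_, ?_⟩
    · rintro _ ⟨c, _, rfl⟩
      exact ⟨c, rfl⟩
    · rintro _ ⟨c, hc, rfl⟩ _ ⟨d, hd, rfl⟩ hne
      exact Set.disjoint_left.2 fun e he he' =>
        h1 c hc d hd (by rintro rfl; exact hne rfl) e he he'
    · refine Set.eq_univ_of_forall fun e => ?_
      obtain ⟨c, hc, he⟩ := h2 e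
      exact ⟨_, ⟨c, hc, rfl⟩, he⟩
  · rintro ⟨𝒞, h1, h2, h3⟩
    choose g hg using fun C : 𝒞 => h1 C.1 C.2
    have hg' : ∀ C : 𝒞, ∀ e, e ∈ C.1 ↔ e ∈ (g C).walk.edges := by
      intro C e
      have := Set.ext_iff.1 (hg C) e
      exact this
    refine ⟨Set.range g, ?_, ?_⟩
    · rintro _ ⟨C, rfl⟩ _ ⟨D, rfl⟩ hne e he he'
      have : C.1 ≠ D.1 := fun h => hne (by rw [Subtype.ext h])
      exact Set.disjoint_left.1 (h2 C.2 D.2 this) ((hg' C e).2 he) ((hg' D e).2 he')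
    · intro e
      obtain ⟨C, hC, he⟩ : e ∈ ⋃₀ 𝒞 := by rw [h3]; trivial
      exact ⟨_, ⟨⟨C, hC⟩, rfl⟩, (hg' ⟨C, hC⟩ e).1 he⟩

end NW
end Multigraph

/-- **Nash-Williams' theorem.** A (possibly infinite) graph is Eulerian, i.e.
its edge set can be partitioned into edge sets of cycles, if and only if it
contains no cut of odd (finite) size. -/
theorem nash_williams_eulerian {V : Type u} {E : Type v} (G : Multigraph V E) :
    G.IsEulerian ↔ ¬ ∃ X : Set V, (G.cut X).Finite ∧ Odd (G.cut X).ncard := by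
  have h : Multigraph.NW.NoOdd G Set.univ ↔
      ¬ ∃ X : Set V, (G.cut X).Finite ∧ Odd (G.cut X).ncard := by
    simp [Multigraph.NW.NoOdd]
  rw [Multigraph.NW.isEulerian_iff, ← h]
  exact ⟨fun hd => hd.noOdd, fun hn => Multigraph.NW.dec_of_noOdd _ _ rfl hn⟩
end
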